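/- arXiv:1308.1155 — 5 statements merged into one kernel-verified Lean document; each statement's English description precedes it below -/
import Mathlib

section
/- Let γ : [0,∞) → (0,∞) be a positive, nondecreasing, continuous function with ∫₂^∞ dr/γ(r) = ∞, and define H(r) = ∫₁^r ds/γ(s) for r ≥ 0, so that H is a strictly increasing continuous map from [0,∞) onto [H(0),∞). Let T > 0 and let f : [0,T] → [0,∞) be continuous and satisfy f(t) ≤ f(0) + ∫₀ᵗ γ(f(r)) dr for all t ∈ [0,T]. Then f(t) ≤ H⁻¹(H(f(0)) + t) for all t ∈ [0,T]. -/
open MeasureTheory Filter Set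

/-!
Let `F t = f 0 + ∫ r in 0..t, γ (f r)`, which dominates `f`. As `γ` is nondecreasing,
`F t - F s ≤ (t - s) γ(F t)` for `s ≤ t`, while `H (F t) - H (F s) ≤ (F t - F s) / γ(F s)`. Hence
`H (F t) - H (F s)` exceeds `t - s` by at most `(t - s) (γ(F t) - γ(F s)) / γ(F 0)`. Summed over a
partition of `[0, t]` into equal steps, the second factor telescopes, so the total excess tends to
`0` with the step and `H (F t) ≤ H (F 0) + t`.
-/

theorem antitoneOn_of_sub_le_mul_sub {g χ : ℝ → ℝ} {S : Set ℝ} [S.OrdConnected]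
    (h : ∀ x ∈ S, ∀ y ∈ S, x ≤ y → g y - g x ≤ (y - x) * (χ y - χ x)) : AntitoneOn g S := by
  -- Bisecting the interval halves the bound, because the increments of `χ` add up.
  have bisect (n : ℕ) : ∀ x ∈ S, ∀ y ∈ S, x ≤ y →
      g y - g x ≤ (y - x) * (χ y - χ x) * (1 / 2) ^ n := by
    induction n with
    | zero => simpa using h
    | succ n ih =>
      intro x hx y hy hxy
      obtain ⟨hxm, hmy⟩ : x ≤ (x + y) / 2 ∧ (x + y) / 2 ≤ y := by constructor <;> linarith
      have hm : (x + y) / 2 ∈ S := Set.Icc_subset S hx hy ⟨hxm, hmy⟩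
      calc g y - g x
          = (g y - g ((x + y) / 2)) + (g ((x + y) / 2) - g x) := by ring
        _ ≤ (y - (x + y) / 2) * (χ y - χ ((x + y) / 2)) * (1 / 2) ^ n +
            ((x + y) / 2 - x) * (χ ((x + y) / 2) - χ x) * (1 / 2) ^ n :=
          add_le_add (ih _ hm _ hy hmy) (ih _ hx _ hm hxm)
        _ = (y - x) * (χ y - χ x) * (1 / 2) ^ (n + 1) := by ring
  intro x hx y hy hxy
  have hlim : Tendsto (fun n : ℕ => (y - x) * (χ y - χ x) * (1 / 2 : ℝ) ^ n) atTop (nhds 0) := by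
    simpa using (tendsto_pow_atTop_nhds_zero_of_lt_one (r := (1 / 2 : ℝ))
      (by norm_num) (by norm_num)).const_mul ((y - x) * (χ y - χ x))
  exact sub_nonpos.1 (ge_of_tendsto' hlim fun n => bisect n x hx y hy hxy)

section MonotonePositive

variable {γ : ℝ → ℝ} {S : Set ℝ}

theorem antitoneOn_one_div_of_pos (hpos : ∀ r ∈ S, 0 < γ r) (hmono : MonotoneOn γ S) :
    AntitoneOn (fun r => 1 / γ r) S := fun x hx _ hy hxy =>
  one_div_le_one_div_of_le (hpos x hx) (hmono hx hy hxy)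

variable [S.OrdConnected]

theorem intervalIntegrable_one_div_of_monotoneOn (hpos : ∀ r ∈ S, 0 < γ r)
    (hmono : MonotoneOn γ S) {x y : ℝ} (hx : x ∈ S) (hy : y ∈ S) :
    IntervalIntegrable (fun r => 1 / γ r) volume x y :=
  ((antitoneOn_one_div_of_pos hpos hmono).mono
    (Set.OrdConnected.uIcc_subset ‹_› hx hy)).intervalIntegrable

theorem integral_one_div_le_sub_div_of_monotoneOn (hpos : ∀ r ∈ S, 0 < γ r)
    (hmono : MonotoneOn γ S) {x y : ℝ} (hx : x ∈ S) (hy : y ∈ S) (hxy : x ≤ y) :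
    ∫ r in x..y, 1 / γ r ≤ (y - x) / γ x :=
  calc ∫ r in x..y, 1 / γ r
      ≤ ∫ _ in x..y, 1 / γ x :=
        intervalIntegral.integral_mono_on hxy
          (intervalIntegrable_one_div_of_monotoneOn hpos hmono hx hy) intervalIntegrable_const
          fun _ hr => antitoneOn_one_div_of_pos hpos hmono hx (Set.Icc_subset S hx hy hr) hr.1
    _ = (y - x) / γ x := by
        rw [intervalIntegral.integral_const, smul_eq_mul, mul_one_div]

theorem strictMonoOn_integral_one_div (hpos : ∀ r ∈ S, 0 < γ r) (hmono : MonotoneOn γ S)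
    {a : ℝ} (ha : a ∈ S) : StrictMonoOn (fun x => ∫ r in a..x, 1 / γ r) S := by
  intro x hx y hy hxy
  have hint {z : ℝ} (hz : z ∈ S) : IntervalIntegrable (fun r => 1 / γ r) volume a z :=
    intervalIntegrable_one_div_of_monotoneOn hpos hmono ha hz
  rw [← sub_pos, intervalIntegral.integral_interval_sub_left (hint hy) (hint hx)]
  exact intervalIntegral.intervalIntegral_pos_of_pos_on
    (intervalIntegrable_one_div_of_monotoneOn hpos hmono hx hy)
    (fun r hr => one_div_pos.2 (hpos r (Set.Icc_subset S hx hy (Ioo_subset_Icc_self hr)))) hxy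

theorem integral_one_div_sub_le_mul_sub (hpos : ∀ r ∈ S, 0 < γ r) (hmono : MonotoneOn γ S)
    {k x y δ : ℝ} (hk : k ∈ S) (hx : x ∈ S) (hy : y ∈ S) (hkx : k ≤ x) (hxy : x ≤ y)
    (hδ : 0 ≤ δ) (hyx : y - x ≤ δ * γ y) :
    (∫ r in x..y, 1 / γ r) - δ ≤ δ * (γ y / γ k - γ x / γ k) := by
  have hγx : 0 < γ x := hpos x hx
  calc (∫ r in x..y, 1 / γ r) - δ
      ≤ (y - x) / γ x - δ := by
        gcongr
        exact integral_one_div_le_sub_div_of_monotoneOn hpos hmono hx hy hxy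
    _ ≤ δ * γ y / γ x - δ := by gcongr
    _ = δ * ((γ y - γ x) / γ x) := by field_simp
    _ ≤ δ * ((γ y - γ x) / γ k) :=
        mul_le_mul_of_nonneg_left
          (div_le_div_of_nonneg_left (sub_nonneg.2 (hmono hx hy hxy)) (hpos k hk)
            (hmono hk hx hkx)) hδ
    _ = δ * (γ y / γ k - γ x / γ k) := by rw [sub_div]

theorem integral_one_div_le_of_sub_le_mul (hpos : ∀ r ∈ S, 0 < γ r) (hmono : MonotoneOn γ S)
    {F : ℝ → ℝ} {a b : ℝ} (hab : a ≤ b) (hFS : MapsTo F (Icc a b) S)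
    (hFmono : MonotoneOn F (Icc a b))
    (hF : ∀ s ∈ Icc a b, ∀ t ∈ Icc a b, s ≤ t → F t - F s ≤ (t - s) * γ (F t)) :
    ∫ r in F a..F b, 1 / γ r ≤ b - a := by
  have ha : a ∈ Icc a b := left_mem_Icc.2 hab
  have hincr : ∀ s ∈ Icc a b, ∀ t ∈ Icc a b, s ≤ t →
      ((∫ r in F a..F t, 1 / γ r) - t) - ((∫ r in F a..F s, 1 / γ r) - s) ≤
        (t - s) * (γ (F t) / γ (F a) - γ (F s) / γ (F a)) := by
    intro s hs t ht hst
    have hint {t : ℝ} (ht : t ∈ Icc a b) :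
        IntervalIntegrable (fun r => 1 / γ r) volume (F a) (F t) :=
      intervalIntegrable_one_div_of_monotoneOn hpos hmono (hFS ha) (hFS ht)
    rw [sub_sub_sub_comm, intervalIntegral.integral_interval_sub_left (hint ht) (hint hs)]
    exact integral_one_div_sub_le_mul_sub hpos hmono (hFS ha) (hFS hs) (hFS ht)
      (hFmono ha hs hs.1) (hFmono hs ht hst) (sub_nonneg.2 hst) (hF s hs t ht hst)
  have hanti := antitoneOn_of_sub_le_mul_sub hincr ha (right_mem_Icc.2 hab) hab
  simp only [intervalIntegral.integral_same] at hanti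
  linarith

end MonotonePositive

theorem integral_one_div_le_of_le_add_integral {γ f : ℝ → ℝ} {c K a b : ℝ}
    (hpos : ∀ r ∈ Ici c, 0 < γ r) (hmono : MonotoneOn γ (Ici c)) (hab : a ≤ b)
    (hfc : ∀ t ∈ Icc a b, c ≤ f t)
    (hint : IntervalIntegrable (fun r => γ (f r)) volume a b)
    (hf : ∀ t ∈ Icc a b, f t ≤ K + ∫ r in a..t, γ (f r)) :
    ∫ r in K..(K + ∫ r in a..b, γ (f r)), 1 / γ r ≤ b - a := by
  set F : ℝ → ℝ := fun t => K + ∫ r in a..t, γ (f r) with hFdef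
  have hint' {s t : ℝ} (hs : s ∈ Icc a b) (ht : t ∈ Icc a b) :
      IntervalIntegrable (fun r => γ (f r)) volume s t :=
    hint.mono_set (uIcc_subset_uIcc (Icc_subset_uIcc hs) (Icc_subset_uIcc ht))
  have ha : a ∈ Icc a b := left_mem_Icc.2 hab
  have hsub {s t : ℝ} (hs : s ∈ Icc a b) (ht : t ∈ Icc a b) :
      F t - F s = ∫ r in s..t, γ (f r) := by
    rw [← intervalIntegral.integral_interval_sub_left (hint' ha ht) (hint' ha hs),
      add_sub_add_left_eq_sub]
  have hFc : MapsTo F (Icc a b) (Ici c) := fun t ht => (hfc t ht).trans (hf t ht)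
  have hFmono : MonotoneOn F (Icc a b) := fun s hs t ht hst => by
    rw [← sub_nonneg, hsub hs ht]
    exact intervalIntegral.integral_nonneg hst fun r hr =>
      (hpos _ (hfc r (Icc_subset_Icc hs.1 ht.2 hr))).le
  have hFincr : ∀ s ∈ Icc a b, ∀ t ∈ Icc a b, s ≤ t → F t - F s ≤ (t - s) * γ (F t) := by
    intro s hs t ht hst
    rw [hsub hs ht, ← smul_eq_mul, ← intervalIntegral.integral_const]
    refine intervalIntegral.integral_mono_on hst (hint' hs ht) intervalIntegrable_const
      fun r hr => ?_
    have hr' : r ∈ Icc a b := Icc_subset_Icc hs.1 ht.2 hr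
    exact hmono (hfc r hr') (hFc ht) ((hf r hr').trans (hFmono hr' ht hr.2))
  simpa [hFdef] using integral_one_div_le_of_sub_le_mul hpos hmono hab hFc hFmono hFincr

theorem stmt_0_general {γ H Hinv f : ℝ → ℝ} {T : ℝ}
    (hγ_pos : ∀ r ∈ Ici (0 : ℝ), 0 < γ r)
    (hγ_mono : MonotoneOn γ (Ici (0 : ℝ)))
    (hH : ∀ r ∈ Ici (0 : ℝ), H r = ∫ s in (1 : ℝ)..r, 1 / γ s)
    (hHinv : ∀ y ∈ Ici (H 0), Hinv y ∈ Ici (0 : ℝ) ∧ H (Hinv y) = y)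
    (hf_nonneg : ∀ t ∈ Icc 0 T, 0 ≤ f t)
    (hf_int : IntervalIntegrable (fun r => γ (f r)) volume 0 T)
    (hf_ineq : ∀ t ∈ Icc 0 T, f t ≤ f 0 + ∫ r in (0 : ℝ)..t, γ (f r)) :
    ∀ t ∈ Icc 0 T, f t ≤ Hinv (H (f 0) + t) := by
  intro t ht
  have h1 : (1 : ℝ) ∈ Ici (0 : ℝ) := zero_le_one' ℝ
  have hf0 : f 0 ∈ Ici (0 : ℝ) := hf_nonneg 0 ⟨le_rfl, ht.1.trans ht.2⟩
  have hint {r : ℝ} (hr : r ∈ Ici (0 : ℝ)) : IntervalIntegrable (fun s => 1 / γ s) volume 1 r :=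
    intervalIntegrable_one_div_of_monotoneOn hγ_pos hγ_mono h1 hr
  have hH_mono : StrictMonoOn H (Ici 0) :=
    (strictMonoOn_integral_one_div hγ_pos hγ_mono h1).congr fun r hr => (hH r hr).symm
  set F : ℝ := f 0 + ∫ r in (0 : ℝ)..t, γ (f r)
  have hfF : f t ≤ F := hf_ineq t ht
  have hF : F ∈ Ici (0 : ℝ) := (hf_nonneg t ht).trans hfF
  have hIcc : Icc 0 t ⊆ Icc 0 T := Icc_subset_Icc_right ht.2
  have hHF : H F - H (f 0) ≤ t := by
    rw [hH F hF, hH _ hf0, intervalIntegral.integral_interval_sub_left (hint hF) (hint hf0),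
      ← sub_zero t]
    exact integral_one_div_le_of_le_add_integral hγ_pos hγ_mono ht.1
      (fun s hs => hf_nonneg s (hIcc hs))
      (hf_int.mono_set (uIcc_subset_uIcc_left (Icc_subset_uIcc ht))) fun s hs => hf_ineq s (hIcc hs)
  have hy : H (f 0) + t ∈ Ici (H 0) :=
    le_add_of_le_of_nonneg (hH_mono.monotoneOn (mem_Ici.2 le_rfl) hf0 hf0) ht.1
  obtain ⟨hinv_nonneg, hH_inv⟩ := hHinv _ hy
  refine hfF.trans ((hH_mono.le_iff_le hF hinv_nonneg).1 ?_)
  linarith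

/-- Osgood's lemma: if `γ` is positive, nondecreasing and continuous on `[0,∞)` with
`∫₂^∞ dr/γ(r) = ∞`, `H(r) = ∫₁^r ds/γ(s)` with inverse `Hinv` on `[H(0),∞)`, and a continuous
nonnegative `f` on `[0,T]` satisfies `f(t) ≤ f(0) + ∫₀ᵗ γ(f(r)) dr`, then
`f(t) ≤ Hinv (H (f 0) + t)`. -/
theorem stmt_0
    (γ : ℝ → ℝ)
    (hγ_pos : ∀ r ∈ Set.Ici (0:ℝ), 0 < γ r)
    (hγ_mono : MonotoneOn γ (Set.Ici (0:ℝ)))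
    (hγ_cont : ContinuousOn γ (Set.Ici (0:ℝ)))
    (hγ_div : Tendsto (fun R : ℝ => ∫ r in (2:ℝ)..R, 1 / γ r) atTop atTop)
    (H : ℝ → ℝ)
    (hH : ∀ r ∈ Set.Ici (0:ℝ), H r = ∫ s in (1:ℝ)..r, 1 / γ s)
    (Hinv : ℝ → ℝ)
    (hHinv_left : ∀ r ∈ Set.Ici (0:ℝ), Hinv (H r) = r)
    (hHinv_right : ∀ y ∈ Set.Ici (H 0), Hinv y ∈ Set.Ici (0:ℝ) ∧ H (Hinv y) = y)
    (T : ℝ) (hT : 0 < T)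
    (f : ℝ → ℝ)
    (hf_nonneg : ∀ t ∈ Set.Icc (0:ℝ) T, 0 ≤ f t)
    (hf_cont : ContinuousOn f (Set.Icc (0:ℝ) T))
    (hf_ineq : ∀ t ∈ Set.Icc (0:ℝ) T, f t ≤ f 0 + ∫ r in (0:ℝ)..t, γ (f r)) :
    ∀ t ∈ Set.Icc (0:ℝ) T, f t ≤ Hinv (H (f 0) + t) :=
  stmt_0_general hγ_pos hγ_mono hH hHinv_right hf_nonneg
    ((hγ_cont.comp hf_cont hf_nonneg).intervalIntegrable_of_Icc hT.le) hf_ineq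
end

section
/- Fix a Littlewood–Paley partition as in the setup. For every s ≥ 0 there exists a constant C = C_s > 0 such that for every Schwartz function u on ℝⁿ: (1/C)·∫_{ℝⁿ}(1+|ξ|²)^s |𝓕u(ξ)|² dξ ≤ ∑_{j=−1}^∞ 2^{2js} ‖Δⱼu‖_{L²}² ≤ C·∫_{ℝⁿ}(1+|ξ|²)^s |𝓕u(ξ)|² dξ. -/
open MeasureTheory FourierTransform Function
open scoped ENNReal NNReal SchwartzMap

/-- The Littlewood–Paley block `Δⱼf = 𝓕⁻¹(φ(2⁻ʲ·)·𝓕f)` for `j ≥ 0`. -/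
noncomputable def deltaJ {n : ℕ} (φ : EuclideanSpace ℝ (Fin n) → ℝ)
    (f : EuclideanSpace ℝ (Fin n) → ℂ) (j : ℕ) : EuclideanSpace ℝ (Fin n) → ℂ :=
  𝓕⁻ fun ξ => (φ ((2:ℝ) ^ (-(j:ℤ)) • ξ) : ℂ) * 𝓕 f ξ

/-- The low-frequency Littlewood–Paley block `Δ₋₁f = 𝓕⁻¹(χ·𝓕f)`. -/
noncomputable def deltaNeg {n : ℕ} (χ : EuclideanSpace ℝ (Fin n) → ℝ)
    (f : EuclideanSpace ℝ (Fin n) → ℂ) : EuclideanSpace ℝ (Fin n) → ℂ :=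
  𝓕⁻ fun ξ => (χ ξ : ℂ) * 𝓕 f ξ

/-!
By Plancherel, `∑ᵢ 2^{2(i-1)s} ‖ψᵢ(D)u‖²`, where `ψᵢ(D)u = 𝓕⁻¹(ψᵢ 𝓕u)`, is the integral of
`|𝓕u|²` against the symbol `∑ᵢ 2^{2(i-1)s} ψᵢ²`, so it suffices to compare this symbol with
`(1 + |ξ|²)^s` pointwise. At a given frequency only boundedly many `ψᵢ` are nonzero, and each of
them has `4^{i-1}` comparable to `1 + |ξ|²`. The symbol is thus comparable to
`(1 + |ξ|²)^s ∑ᵢ ψᵢ²`, where `∑ᵢ ψᵢ²` is bounded above because the `ψᵢ` are, and below by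
Cauchy–Schwarz applied to `∑ᵢ ψᵢ = 1`.
-/

section WeightedSquares

variable {ι : Type*} {a w : ι → ℝ} {S : Finset ι} {B K W : ℝ}

theorem tsum_mul_sq_eq_sum (ha : ∀ i ∉ S, a i = 0) :
    ∑' i, w i * a i ^ 2 = ∑ i ∈ S, w i * a i ^ 2 :=
  tsum_eq_sum fun i hi => by simp [ha i hi]

theorem le_card_mul_tsum_mul_sq (ha : ∀ i ∉ S, a i = 0) (hsum : HasSum a 1) (hW : 0 ≤ W)
    (hWw : ∀ i, a i ≠ 0 → W ≤ K * w i) :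
    W ≤ S.card * K * ∑' i, w i * a i ^ 2 := by
  have hone : ∑ i ∈ S, a i = 1 := (tsum_eq_sum ha).symm.trans hsum.tsum_eq
  have hterm (i : ι) : W * a i ^ 2 ≤ K * (w i * a i ^ 2) := by
    rcases eq_or_ne (a i) 0 with h | h
    · simp [h]
    · rw [← mul_assoc]
      exact mul_le_mul_of_nonneg_right (hWw i h) (sq_nonneg _)
  calc W = W * (∑ i ∈ S, a i) ^ 2 := by rw [hone, one_pow, mul_one]
    _ ≤ W * (S.card * ∑ i ∈ S, a i ^ 2) :=
      mul_le_mul_of_nonneg_left sq_sum_le_card_mul_sum_sq hW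
    _ = S.card * ∑ i ∈ S, W * a i ^ 2 := by rw [← Finset.mul_sum, mul_left_comm]
    _ ≤ S.card * ∑ i ∈ S, K * (w i * a i ^ 2) :=
      mul_le_mul_of_nonneg_left (Finset.sum_le_sum fun i _ => hterm i) (Nat.cast_nonneg _)
    _ = S.card * K * ∑' i, w i * a i ^ 2 := by
      rw [tsum_mul_sq_eq_sum ha, ← Finset.mul_sum, mul_assoc]

theorem tsum_mul_sq_le_card_mul (ha : ∀ i ∉ S, a i = 0) (haB : ∀ i, |a i| ≤ B) (hKW : 0 ≤ K * W)
    (hwW : ∀ i, a i ≠ 0 → w i ≤ K * W) :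
    ∑' i, w i * a i ^ 2 ≤ S.card * K * B ^ 2 * W := by
  have hterm (i : ι) : w i * a i ^ 2 ≤ K * W * B ^ 2 := by
    rcases eq_or_ne (a i) 0 with h | h
    · simpa [h] using mul_nonneg hKW (sq_nonneg B)
    · exact mul_le_mul (hwW i h) (sq_le_sq.2 ((haB i).trans (le_abs_self B))) (sq_nonneg _) hKW
  calc ∑' i, w i * a i ^ 2 = ∑ i ∈ S, w i * a i ^ 2 := tsum_mul_sq_eq_sum ha
    _ ≤ S.card • (K * W * B ^ 2) := Finset.sum_le_card_nsmul _ _ _ fun i _ => hterm i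
    _ = S.card * K * B ^ 2 * W := by rw [nsmul_eq_mul]; ring

end WeightedSquares

theorem rpow_le_rpow_abs_mul_rpow {a b c : ℝ} (ha : 0 < a) (hb : 0 < b) (hab : a ≤ c * b)
    (hba : b ≤ c * a) (s : ℝ) : a ^ s ≤ c ^ |s| * b ^ s := by
  have hc : 0 < c := pos_of_mul_pos_left (ha.trans_le hab) hb.le
  rcases le_total 0 s with hs | hs
  · rw [abs_of_nonneg hs, ← Real.mul_rpow hc.le hb.le]
    exact Real.rpow_le_rpow ha.le hab hs
  · rw [abs_of_nonpos hs, Real.rpow_neg hc.le, ← Real.inv_rpow hc.le,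
      ← Real.mul_rpow (inv_nonneg.2 hc.le) hb.le]
    exact Real.rpow_le_rpow_of_nonpos (by positivity) ((inv_mul_le_iff₀ hc).2 hba) hs

theorem exists_forall_mem_Icc_of_zpow_comparable {P : ℕ → Prop} {b x : ℝ} {m : ℕ} (hb : 1 < b)
    (hlow : ∀ i, P i → b ^ ((i : ℤ) - 1) ≤ b ^ m * x)
    (hupp : ∀ i, P i → x ≤ b ^ m * b ^ ((i : ℤ) - 1)) :
    ∃ k, ∀ i, P i → i ∈ Finset.Icc k (k + 2 * m) := by
  classical
  by_cases h : ∃ i, P i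
  · refine ⟨Nat.find h, fun i hi => Finset.mem_Icc.2 ⟨Nat.find_min' h hi, ?_⟩⟩
    have hb₀ : 0 < b := one_pos.trans hb
    have hle : b ^ ((i : ℤ) - 1) ≤ b ^ ((m : ℤ) + (m + (Nat.find h - 1))) := by
      rw [zpow_add₀ hb₀.ne', zpow_add₀ hb₀.ne', zpow_natCast]
      exact (hlow i hi).trans (by gcongr; exact hupp _ (Nat.find_spec h))
    rw [zpow_le_zpow_iff_right₀ hb] at hle
    omega
  · exact ⟨0, fun i hi => (h ⟨i, hi⟩).elim⟩

section DyadicPartition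

variable {E : Type*} [NormedAddCommGroup E] [NormedSpace ℝ E]

/-- A dyadic partition of unity in frequency: functions `ψᵢ` of temperate growth, uniformly
bounded by `B` and with sum `1`, such that `ψᵢ` lives where `1 + |ξ|²` is comparable to `4^{i-1}`
up to the factor `4^m`. The index is shifted by one from the usual Littlewood–Paley numbering, so
that `ψ₀` is the low-frequency block `Δ₋₁`. -/
structure IsDyadicPartition (ψ : ℕ → E → ℝ) (m : ℕ) (B : ℝ) : Prop where
  hasTemperateGrowth : ∀ i, (ψ i).HasTemperateGrowth
  abs_le : ∀ i ξ, |ψ i ξ| ≤ B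
  zpow_le : ∀ i ξ, ψ i ξ ≠ 0 → (4 : ℝ) ^ ((i : ℤ) - 1) ≤ 4 ^ m * (1 + ‖ξ‖ ^ 2)
  le_zpow : ∀ i ξ, ψ i ξ ≠ 0 → 1 + ‖ξ‖ ^ 2 ≤ 4 ^ m * (4 : ℝ) ^ ((i : ℤ) - 1)
  hasSum_one : ∀ ξ, HasSum (ψ · ξ) 1

/-- The weight `2^{2(i-1)s}` of the `i`-th block in the Littlewood–Paley sum; the exponent is
shifted as in `IsDyadicPartition`. -/
noncomputable def dyadicWeight (s : ℝ) (i : ℕ) : ℝ :=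
  2 ^ (2 * ((i : ℝ) - 1) * s)

/-- The Fourier symbol `∑ᵢ 2^{2(i-1)s} ψᵢ(ξ)²` of the quadratic form `∑ᵢ 2^{2(i-1)s} ‖ψᵢ(D)u‖²`. -/
noncomputable def littlewoodPaleySymbol {E : Type*} (ψ : ℕ → E → ℝ) (s : ℝ) (ξ : E) : ℝ :=
  ∑' i, dyadicWeight s i * ψ i ξ ^ 2

theorem dyadicWeight_nonneg (s : ℝ) (i : ℕ) : 0 ≤ dyadicWeight s i := by
  unfold dyadicWeight
  positivity

theorem dyadicWeight_eq_zpow_rpow (s : ℝ) (i : ℕ) :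
    dyadicWeight s i = ((4 : ℝ) ^ ((i : ℤ) - 1)) ^ s := by
  rw [dyadicWeight, Real.rpow_mul zero_le_two, Real.rpow_mul zero_le_two, ← Real.rpow_intCast]
  norm_num

namespace IsDyadicPartition

variable {ψ : ℕ → E → ℝ} {m : ℕ} {B : ℝ}

theorem exists_Icc_eq_zero (hψ : IsDyadicPartition ψ m B) (ξ : E) :
    ∃ k, ∀ i ∉ Finset.Icc k (k + 2 * m), ψ i ξ = 0 := by
  obtain ⟨k, hk⟩ := exists_forall_mem_Icc_of_zpow_comparable (by norm_num : (1 : ℝ) < 4)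
    (fun i => hψ.zpow_le i ξ) (fun i => hψ.le_zpow i ξ)
  exact ⟨k, fun i => not_imp_comm.1 (hk i)⟩

theorem hasSum_littlewoodPaleySymbol (hψ : IsDyadicPartition ψ m B) (s : ℝ) (ξ : E) :
    HasSum (fun i => dyadicWeight s i * ψ i ξ ^ 2) (littlewoodPaleySymbol ψ s ξ) := by
  obtain ⟨k, hk⟩ := hψ.exists_Icc_eq_zero ξ
  exact (summable_of_ne_finset_zero (s := Finset.Icc k (k + 2 * m))
    fun i hi => by simp [hk i hi]).hasSum

theorem rpow_le_littlewoodPaleySymbol (hψ : IsDyadicPartition ψ m B) (s : ℝ) (ξ : E) :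
    (1 + ‖ξ‖ ^ 2) ^ s ≤ (2 * m + 1) * (4 ^ m) ^ |s| * littlewoodPaleySymbol ψ s ξ := by
  obtain ⟨k, hk⟩ := hψ.exists_Icc_eq_zero ξ
  refine (le_card_mul_tsum_mul_sq (K := (4 ^ m) ^ |s|) (w := dyadicWeight s) hk
    (hψ.hasSum_one ξ) (by positivity) fun i hi => ?_).trans_eq ?_
  · rw [dyadicWeight_eq_zpow_rpow]
    exact rpow_le_rpow_abs_mul_rpow (by positivity) (by positivity) (hψ.le_zpow i ξ hi)
      (hψ.zpow_le i ξ hi) s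
  · simp [littlewoodPaleySymbol, add_assoc]

theorem littlewoodPaleySymbol_le_rpow (hψ : IsDyadicPartition ψ m B) (s : ℝ) (ξ : E) :
    littlewoodPaleySymbol ψ s ξ ≤ (2 * m + 1) * (4 ^ m) ^ |s| * B ^ 2 * (1 + ‖ξ‖ ^ 2) ^ s := by
  obtain ⟨k, hk⟩ := hψ.exists_Icc_eq_zero ξ
  refine (tsum_mul_sq_le_card_mul (K := (4 ^ m) ^ |s|) (W := (1 + ‖ξ‖ ^ 2) ^ s) hk
    (hψ.abs_le · ξ) (by positivity) fun i hi => ?_).trans_eq ?_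
  · rw [dyadicWeight_eq_zpow_rpow]
    exact rpow_le_rpow_abs_mul_rpow (by positivity) (by positivity) (hψ.zpow_le i ξ hi)
      (hψ.le_zpow i ξ hi) s
  · simp [add_assoc]

end IsDyadicPartition

end DyadicPartition

section LittlewoodPaley

variable {E : Type*} [NormedAddCommGroup E] [NormedSpace ℝ E] {φ χ : E → ℝ}

/-- The sequence `χ, φ, φ(2⁻¹·), φ(2⁻²·), …` of Littlewood–Paley cutoffs, indexed from `0`. -/
noncomputable def littlewoodPaleyCutoff {E : Type*} [SMul ℝ E] (χ φ : E → ℝ) : ℕ → E → ℝ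
  | 0 => χ
  | j + 1 => fun ξ => φ ((2 : ℝ) ^ (-(j : ℤ)) • ξ)

theorem two_pow_le_and_le_of_apply_smul_ne_zero
    (hφ_supp : support φ ⊆ {ξ : E | 1 / 2 ≤ ‖ξ‖ ∧ ‖ξ‖ ≤ 2}) {j : ℕ} {ξ : E}
    (hξ : φ ((2 : ℝ) ^ (-(j : ℤ)) • ξ) ≠ 0) : 2 ^ j ≤ 2 * ‖ξ‖ ∧ ‖ξ‖ ≤ 2 * 2 ^ j := by
  have h2 : (0 : ℝ) < 2 ^ j := by positivity
  have hmem := hφ_supp hξ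
  simp only [Set.mem_ofPred_eq, norm_smul, zpow_neg, zpow_natCast, norm_inv, norm_pow,
    Real.norm_ofNat, inv_mul_eq_div, le_div_iff₀ h2, div_le_iff₀ h2] at hmem
  constructor <;> linarith [hmem.1, hmem.2]

theorem zpow_comparable_of_littlewoodPaleyCutoff_ne_zero (hχ_supp : support χ ⊆ {ξ : E | ‖ξ‖ ≤ 1})
    (hφ_supp : support φ ⊆ {ξ : E | 1 / 2 ≤ ‖ξ‖ ∧ ‖ξ‖ ≤ 2}) {i : ℕ} {ξ : E}
    (hξ : littlewoodPaleyCutoff χ φ i ξ ≠ 0) :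
    (4 : ℝ) ^ ((i : ℤ) - 1) ≤ 4 ^ 2 * (1 + ‖ξ‖ ^ 2) ∧
      1 + ‖ξ‖ ^ 2 ≤ 4 ^ 2 * (4 : ℝ) ^ ((i : ℤ) - 1) := by
  have hr := norm_nonneg ξ
  cases i with
  | zero =>
    have hle : ‖ξ‖ ≤ 1 := hχ_supp hξ
    have h4 : (4 : ℝ) ^ (((0 : ℕ) : ℤ) - 1) = 1 / 4 := by norm_num
    rw [h4]
    constructor <;> nlinarith
  | succ j =>
    obtain ⟨hlow, hupp⟩ := two_pow_le_and_le_of_apply_smul_ne_zero hφ_supp hξ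
    have hj : (1 : ℝ) ≤ 2 ^ j := one_le_pow₀ one_le_two
    have h4 : (4 : ℝ) ^ (((j + 1 : ℕ) : ℤ) - 1) = (2 ^ j) ^ 2 := by
      rw [Nat.cast_succ, add_sub_cancel_right, zpow_natCast, pow_right_comm]
      norm_num
    rw [h4]
    constructor <;> nlinarith

variable [FiniteDimensional ℝ E]

theorem exists_isDyadicPartition_littlewoodPaleyCutoff (hφ_sm : ContDiff ℝ (⊤ : ℕ∞) φ)
    (hχ_sm : ContDiff ℝ (⊤ : ℕ∞) χ)
    (hφ_supp : support φ ⊆ {ξ : E | 1 / 2 ≤ ‖ξ‖ ∧ ‖ξ‖ ≤ 2})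
    (hχ_supp : support χ ⊆ {ξ : E | ‖ξ‖ ≤ 1})
    (h_sum : ∀ ξ, χ ξ + ∑' j : ℕ, φ ((2 : ℝ) ^ (-(j : ℤ)) • ξ) = 1) :
    ∃ B, IsDyadicPartition (littlewoodPaleyCutoff χ φ) 2 B := by
  have hχc : HasCompactSupport χ := .of_support_subset_isCompact (isCompact_closedBall 0 1)
    fun ξ hξ => by simpa using hχ_supp hξ
  have hφc : HasCompactSupport φ := .of_support_subset_isCompact (isCompact_closedBall 0 2)
    fun ξ hξ => by simpa using (hφ_supp hξ).2
  obtain ⟨Bχ, hBχ⟩ := hχc.exists_bound_of_continuous hχ_sm.continuous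
  obtain ⟨Bφ, hBφ⟩ := hφc.exists_bound_of_continuous hφ_sm.continuous
  have hband (i : ℕ) (ξ : E) (hξ : littlewoodPaleyCutoff χ φ i ξ ≠ 0) :=
    zpow_comparable_of_littlewoodPaleyCutoff_ne_zero hχ_supp hφ_supp hξ
  refine ⟨max Bχ Bφ, ?_, ?_, fun i ξ hξ => (hband i ξ hξ).1, fun i ξ hξ => (hband i ξ hξ).2, ?_⟩
  · rintro (_ | j)
    · exact hχc.hasTemperateGrowth hχ_sm
    · exact (hφc.comp_smul (by positivity)).hasTemperateGrowth
        (hφ_sm.comp (contDiff_const_smul _))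
  · rintro (_ | j) ξ
    · exact (hBχ ξ).trans (le_max_left _ _)
    · exact (hBφ _).trans (le_max_right _ _)
  · intro ξ
    obtain ⟨k, hk⟩ := exists_forall_mem_Icc_of_zpow_comparable (by norm_num : (1 : ℝ) < 4)
      (fun i hi => (hband i ξ hi).1) (fun i hi => (hband i ξ hi).2)
    have hsummable : Summable (littlewoodPaleyCutoff χ φ · ξ) :=
      summable_of_ne_finset_zero fun i => not_imp_comm.1 (hk i)
    rw [← h_sum ξ]
    exact hsummable.tsum_eq_zero_add ▸ hsummable.hasSum

end LittlewoodPaley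

theorem integrable_and_hasSum_integral_of_nonneg_of_le {α ι : Type*} [MeasurableSpace α]
    [Countable ι] {μ : Measure α} {F : ι → α → ℝ} {f g : α → ℝ} (hF : ∀ i, Integrable (F i) μ)
    (hF₀ : ∀ i x, 0 ≤ F i x) (hf : ∀ x, HasSum (F · x) (f x)) (hg : Integrable g μ)
    (hfg : ∀ x, f x ≤ g x) :
    Integrable f μ ∧ HasSum (fun i => ∫ x, F i x ∂μ) (∫ x, f x ∂μ) := by
  have hf_meas : AEStronglyMeasurable f μ :=
    aestronglyMeasurable_of_tendsto_ae (SummationFilter.unconditional ι).filter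
      (fun S => (integrable_finsetSum S fun i _ => hF i).1) (.of_forall hf)
  have hf_int : Integrable f μ := hg.mono' hf_meas (.of_forall fun x => by
    rw [Real.norm_of_nonneg ((hf x).nonneg fun i => hF₀ i x)]
    exact hfg x)
  refine ⟨hf_int, hasSum_integral_of_dominated_convergence F (fun i => (hF i).1)
    (fun i => .of_forall fun x => (Real.norm_of_nonneg (hF₀ i x)).le)
    (.of_forall fun x => (hf x).summable) ?_ (.of_forall hf)⟩
  simpa only [fun x => (hf x).tsum_eq] using hf_int

theorem toReal_eLpNorm_two_sq {α F : Type*} [MeasurableSpace α] {μ : Measure α}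
    [NormedAddCommGroup F] {f : α → F} (hf : AEStronglyMeasurable f μ) :
    (eLpNorm f 2 μ).toReal ^ 2 = ∫ x, ‖f x‖ ^ 2 ∂μ := by
  rw [toReal_eLpNorm hf, lpNorm_eq_integral_norm_rpow_toReal two_ne_zero ENNReal.ofNat_ne_top hf,
    ← Real.rpow_natCast, ← Real.rpow_mul (by positivity)]
  simp

section Plancherel

variable {E F : Type*} [NormedAddCommGroup E] [InnerProductSpace ℝ E] [FiniteDimensional ℝ E]
  [MeasurableSpace E] [BorelSpace E] [NormedAddCommGroup F] [InnerProductSpace ℂ F]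

theorem integrable_sq_mul_norm_fourier_sq {m : E → ℝ} (hm : m.HasTemperateGrowth) (u : 𝓢(E, F)) :
    Integrable fun ξ => m ξ ^ 2 * ‖𝓕 u ξ‖ ^ 2 := by
  have hint := ((SchwartzMap.smulLeftCLM F m (𝓕 u)).memLp 2 volume).integrable_norm_pow two_ne_zero
  simpa [SchwartzMap.smulLeftCLM_apply_apply hm, norm_smul, mul_pow] using hint

theorem integrable_one_add_norm_sq_rpow_mul_norm_fourier_sq (s : ℝ) (u : 𝓢(E, F)) :
    Integrable fun ξ => (1 + ‖ξ‖ ^ 2) ^ s * ‖𝓕 u ξ‖ ^ 2 := by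
  convert integrable_sq_mul_norm_fourier_sq
    (hasTemperateGrowth_one_add_norm_sq_rpow E (s / 2)) u using 3 with ξ
  rw [← Real.rpow_mul_natCast (by positivity), Nat.cast_ofNat, div_mul_cancel₀ s two_ne_zero]

variable [CompleteSpace F]

theorem toReal_eLpNorm_fourierInv_smul_fourier_sq {m : E → ℝ} (hm : m.HasTemperateGrowth)
    (u : 𝓢(E, F)) :
    (eLpNorm (𝓕⁻ fun ξ => m ξ • 𝓕 u ξ) 2 volume).toReal ^ 2 = ∫ ξ, m ξ ^ 2 * ‖𝓕 u ξ‖ ^ 2 := by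
  rw [← SchwartzMap.smulLeftCLM_apply hm, ← SchwartzMap.fourierInv_coe,
    toReal_eLpNorm_two_sq (SchwartzMap.continuous _).aestronglyMeasurable,
    ← SchwartzMap.integral_norm_sq_fourier]
  simp [SchwartzMap.smulLeftCLM_apply_apply hm, norm_smul, mul_pow]

namespace IsDyadicPartition

variable {ψ : ℕ → E → ℝ} {m : ℕ} {B : ℝ}

theorem integrable_and_hasSum_eLpNorm_sq (hψ : IsDyadicPartition ψ m B) (s : ℝ) (u : 𝓢(E, F)) :
    Integrable (fun ξ => littlewoodPaleySymbol ψ s ξ * ‖𝓕 u ξ‖ ^ 2) ∧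
      HasSum (fun i => dyadicWeight s i *
          (eLpNorm (𝓕⁻ fun ξ => ψ i ξ • 𝓕 u ξ) 2 volume).toReal ^ 2)
        (∫ ξ, littlewoodPaleySymbol ψ s ξ * ‖𝓕 u ξ‖ ^ 2) := by
  simp_rw [fun i => toReal_eLpNorm_fourierInv_smul_fourier_sq (hψ.hasTemperateGrowth i) u,
    ← integral_const_mul]
  refine integrable_and_hasSum_integral_of_nonneg_of_le
    (fun i => (integrable_sq_mul_norm_fourier_sq (hψ.hasTemperateGrowth i) u).const_mul _)
    (fun i ξ => mul_nonneg (dyadicWeight_nonneg s i) (by positivity)) (fun ξ => ?_)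
    ((integrable_one_add_norm_sq_rpow_mul_norm_fourier_sq s u).const_mul
      ((2 * m + 1) * (4 ^ m) ^ |s| * B ^ 2)) (fun ξ => ?_)
  · simpa only [mul_assoc] using (hψ.hasSum_littlewoodPaleySymbol s ξ).mul_right (‖𝓕 u ξ‖ ^ 2)
  · rw [← mul_assoc]
    exact mul_le_mul_of_nonneg_right (hψ.littlewoodPaleySymbol_le_rpow s ξ) (sq_nonneg _)

theorem integral_le_tsum_eLpNorm_sq (hψ : IsDyadicPartition ψ m B) (s : ℝ) (u : 𝓢(E, F)) :
    ∫ ξ, (1 + ‖ξ‖ ^ 2) ^ s * ‖𝓕 u ξ‖ ^ 2 ≤ (2 * m + 1) * (4 ^ m) ^ |s| *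
      ∑' i, dyadicWeight s i *
        (eLpNorm (𝓕⁻ fun ξ => ψ i ξ • 𝓕 u ξ) 2 volume).toReal ^ 2 := by
  obtain ⟨hint, hsum⟩ := hψ.integrable_and_hasSum_eLpNorm_sq s u
  rw [hsum.tsum_eq, ← integral_const_mul]
  refine integral_mono (integrable_one_add_norm_sq_rpow_mul_norm_fourier_sq s u)
    (hint.const_mul _) fun ξ => ?_
  rw [← mul_assoc]
  exact mul_le_mul_of_nonneg_right (hψ.rpow_le_littlewoodPaleySymbol s ξ) (sq_nonneg _)

theorem tsum_eLpNorm_sq_le_integral (hψ : IsDyadicPartition ψ m B) (s : ℝ) (u : 𝓢(E, F)) :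
    ∑' i, dyadicWeight s i * (eLpNorm (𝓕⁻ fun ξ => ψ i ξ • 𝓕 u ξ) 2 volume).toReal ^ 2 ≤
      (2 * m + 1) * (4 ^ m) ^ |s| * B ^ 2 * ∫ ξ, (1 + ‖ξ‖ ^ 2) ^ s * ‖𝓕 u ξ‖ ^ 2 := by
  obtain ⟨hint, hsum⟩ := hψ.integrable_and_hasSum_eLpNorm_sq s u
  rw [hsum.tsum_eq, ← integral_const_mul]
  refine integral_mono hint
    ((integrable_one_add_norm_sq_rpow_mul_norm_fourier_sq s u).const_mul _) fun ξ => ?_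
  rw [← mul_assoc]
  exact mul_le_mul_of_nonneg_right (hψ.littlewoodPaleySymbol_le_rpow s ξ) (sq_nonneg _)

theorem exists_sobolev_comparable (hψ : IsDyadicPartition ψ m B) (s : ℝ) :
    ∃ C > (0 : ℝ), ∀ u : 𝓢(E, F),
      (1 / C) * (∫ ξ, (1 + ‖ξ‖ ^ 2) ^ s * ‖𝓕 u ξ‖ ^ 2) ≤
          ∑' i, dyadicWeight s i * (eLpNorm (𝓕⁻ fun ξ => ψ i ξ • 𝓕 u ξ) 2 volume).toReal ^ 2 ∧
        ∑' i, dyadicWeight s i * (eLpNorm (𝓕⁻ fun ξ => ψ i ξ • 𝓕 u ξ) 2 volume).toReal ^ 2 ≤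
          C * ∫ ξ, (1 + ‖ξ‖ ^ 2) ^ s * ‖𝓕 u ξ‖ ^ 2 := by
  set A : ℝ := (2 * m + 1) * (4 ^ m) ^ |s|
  have hA : 0 < A := by positivity
  refine ⟨A * (1 + B ^ 2), by positivity, fun u => ?_⟩
  rw [one_div, inv_mul_le_iff₀ (by positivity)]
  constructor
  · refine (hψ.integral_le_tsum_eLpNorm_sq s u).trans ?_
    refine mul_le_mul_of_nonneg_right (le_mul_of_one_le_right hA.le (by linarith [sq_nonneg B])) ?_
    exact tsum_nonneg fun i => mul_nonneg (dyadicWeight_nonneg s i) (sq_nonneg _)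
  · refine (hψ.tsum_eLpNorm_sq_le_integral s u).trans ?_
    refine mul_le_mul_of_nonneg_right (mul_le_mul_of_nonneg_left (by linarith) hA.le) ?_
    exact integral_nonneg fun ξ => by positivity

end IsDyadicPartition

theorem tsum_littlewoodPaleyCutoff_eq_add_tsum {χ φ : E → ℝ} {m : ℕ} {B : ℝ}
    (hψ : IsDyadicPartition (littlewoodPaleyCutoff χ φ) m B) (s : ℝ) (u : 𝓢(E, F)) :
    ∑' i, dyadicWeight s i *
        (eLpNorm (𝓕⁻ fun ξ => littlewoodPaleyCutoff χ φ i ξ • 𝓕 u ξ) 2 volume).toReal ^ 2 =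
      (2 : ℝ) ^ (-(2 : ℝ) * s) * (eLpNorm (𝓕⁻ fun ξ => χ ξ • 𝓕 u ξ) 2 volume).toReal ^ 2 +
        ∑' j : ℕ, (2 : ℝ) ^ (2 * (j : ℝ) * s) *
          (eLpNorm (𝓕⁻ fun ξ => φ ((2 : ℝ) ^ (-(j : ℤ)) • ξ) • 𝓕 u ξ)
            2 volume).toReal ^ 2 := by
  rw [(hψ.integrable_and_hasSum_eLpNorm_sq s u).2.summable.tsum_eq_zero_add]
  simp [dyadicWeight, littlewoodPaleyCutoff]

theorem stmt_3_general {φ χ : E → ℝ}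
    (hφ_sm : ContDiff ℝ (⊤ : ℕ∞) φ) (hχ_sm : ContDiff ℝ (⊤ : ℕ∞) χ)
    (hφ_supp : support φ ⊆ {ξ : E | 1 / 2 ≤ ‖ξ‖ ∧ ‖ξ‖ ≤ 2})
    (hχ_supp : support χ ⊆ {ξ : E | ‖ξ‖ ≤ 1})
    (h_sum : ∀ ξ, χ ξ + ∑' j : ℕ, φ ((2 : ℝ) ^ (-(j : ℤ)) • ξ) = 1) (s : ℝ) :
    ∃ C > (0 : ℝ), ∀ u : 𝓢(E, F),
      (1 / C) * (∫ ξ, (1 + ‖ξ‖ ^ 2) ^ s * ‖𝓕 u ξ‖ ^ 2) ≤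
          (2 : ℝ) ^ (-(2 : ℝ) * s) * (eLpNorm (𝓕⁻ fun ξ => χ ξ • 𝓕 u ξ) 2 volume).toReal ^ 2 +
            ∑' j : ℕ, (2 : ℝ) ^ (2 * (j : ℝ) * s) *
              (eLpNorm (𝓕⁻ fun ξ => φ ((2 : ℝ) ^ (-(j : ℤ)) • ξ) • 𝓕 u ξ)
                2 volume).toReal ^ 2 ∧
        (2 : ℝ) ^ (-(2 : ℝ) * s) * (eLpNorm (𝓕⁻ fun ξ => χ ξ • 𝓕 u ξ) 2 volume).toReal ^ 2 +
            ∑' j : ℕ, (2 : ℝ) ^ (2 * (j : ℝ) * s) *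
              (eLpNorm (𝓕⁻ fun ξ => φ ((2 : ℝ) ^ (-(j : ℤ)) • ξ) • 𝓕 u ξ)
                2 volume).toReal ^ 2 ≤
          C * ∫ ξ, (1 + ‖ξ‖ ^ 2) ^ s * ‖𝓕 u ξ‖ ^ 2 := by
  obtain ⟨B, hψ⟩ :=
    exists_isDyadicPartition_littlewoodPaleyCutoff hφ_sm hχ_sm hφ_supp hχ_supp h_sum
  simpa only [tsum_littlewoodPaleyCutoff_eq_add_tsum hψ s] using
    hψ.exists_sobolev_comparable (F := F) s

end Plancherel

/-- Littlewood–Paley characterization of the Sobolev `H^s` norm: for each `s ≥ 0` there is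
`C = C_s > 0` with `C⁻¹‖u‖_{H^s}² ≤ ∑_{j=−1}^∞ 2^{2js}‖Δⱼu‖_{L²}² ≤ C‖u‖_{H^s}²` for every
Schwartz `u`. -/
theorem stmt_3 (n : ℕ) (hn : 1 ≤ n)
    (φ χ : EuclideanSpace ℝ (Fin n) → ℝ)
    (hφ_sm : ContDiff ℝ (⊤ : ℕ∞) φ) (hχ_sm : ContDiff ℝ (⊤ : ℕ∞) χ)
    (hφ_rad : ∃ h : ℝ → ℝ, ∀ ξ, φ ξ = h ‖ξ‖)
    (hχ_rad : ∃ h : ℝ → ℝ, ∀ ξ, χ ξ = h ‖ξ‖)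
    (hφ_supp : Function.support φ ⊆ {ξ : EuclideanSpace ℝ (Fin n) | 1/2 ≤ ‖ξ‖ ∧ ‖ξ‖ ≤ 2})
    (hχ_supp : Function.support χ ⊆ {ξ : EuclideanSpace ℝ (Fin n) | ‖ξ‖ ≤ 1})
    (h_sum : ∀ ξ, χ ξ + ∑' j : ℕ, φ ((2:ℝ) ^ (-(j:ℤ)) • ξ) = 1)
    (h_disj : ∀ j k : ℕ, 1 < |(j:ℤ) - (k:ℤ)| →
      Disjoint (Function.support fun ξ => φ ((2:ℝ) ^ (-(j:ℤ)) • ξ))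
        (Function.support fun ξ => φ ((2:ℝ) ^ (-(k:ℤ)) • ξ)))
    (s : ℝ) (hs : 0 ≤ s) :
    ∃ C > (0:ℝ), ∀ u : 𝓢(EuclideanSpace ℝ (Fin n), ℂ),
      (1 / C) * (∫ ξ, (1 + ‖ξ‖ ^ 2) ^ s * ‖𝓕 (⇑u) ξ‖ ^ 2) ≤
          (2:ℝ) ^ (-(2:ℝ) * s) * ((eLpNorm (deltaNeg χ ⇑u) 2 volume).toReal) ^ 2 +
            ∑' j : ℕ, (2:ℝ) ^ (2 * (j:ℝ) * s) * ((eLpNorm (deltaJ φ ⇑u j) 2 volume).toReal) ^ 2 ∧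
        (2:ℝ) ^ (-(2:ℝ) * s) * ((eLpNorm (deltaNeg χ ⇑u) 2 volume).toReal) ^ 2 +
            ∑' j : ℕ, (2:ℝ) ^ (2 * (j:ℝ) * s) * ((eLpNorm (deltaJ φ ⇑u j) 2 volume).toReal) ^ 2 ≤
          C * ∫ ξ, (1 + ‖ξ‖ ^ 2) ^ s * ‖𝓕 (⇑u) ξ‖ ^ 2 :=
  stmt_3_general (F := ℂ) hφ_sm hχ_sm hφ_supp hχ_supp h_sum s
end

section
/- Fix a Littlewood–Paley partition as in the setup, and let 0 < s < 1. There exists a constant C = C_s > 0 such that for every bounded continuous function u : ℝⁿ → ℂ: (i) sup_{j≥−1} 2^{js}‖Δⱼu‖_{L^∞} ≤ C·|u|_{C^s} whenever |u|_{C^s} < ∞, and (ii) if sup_{j≥−1} 2^{js}‖Δⱼu‖_{L^∞} < ∞ then |u|_{C^s} ≤ C·sup_{j≥−1} 2^{js}‖Δⱼu‖_{L^∞}. -/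
open MeasureTheory FourierTransform Function
open scoped ENNReal NNReal

/-- The Littlewood–Paley convolution kernels `ψ₋₁ = 𝓕⁻¹χ` and `ψⱼ = 𝓕⁻¹(φ(2⁻ʲ·))`, `j ≥ 0`. -/
noncomputable def lpKernel {n : ℕ} (χ φ : EuclideanSpace ℝ (Fin n) → ℝ) (j : ℤ) :
    EuclideanSpace ℝ (Fin n) → ℂ :=
  if j = -1 then 𝓕⁻ fun ξ => (χ ξ : ℂ) else 𝓕⁻ fun ξ => (φ ((2:ℝ) ^ (-j) • ξ) : ℂ)

/-- The Littlewood–Paley block `Δⱼu = ψⱼ * u`, acting on bounded continuous functions. -/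
noncomputable def lpBlock {n : ℕ} (χ φ : EuclideanSpace ℝ (Fin n) → ℝ) (j : ℤ)
    (u : EuclideanSpace ℝ (Fin n) → ℂ) : EuclideanSpace ℝ (Fin n) → ℂ :=
  MeasureTheory.convolution (lpKernel χ φ j) u (ContinuousLinearMap.mul ℝ ℂ) volume

/-- The Hölder norm `|u|_{C^s} = ‖u‖_{L^∞} + sup_{x≠y} |u(x)−u(y)|/|x−y|^s`, valued in `ℝ≥0∞`. -/
noncomputable def holderNorm {n : ℕ} (s : ℝ) (u : EuclideanSpace ℝ (Fin n) → ℂ) : ℝ≥0∞ :=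
  eLpNorm u ⊤ volume +
    ⨆ (x : EuclideanSpace ℝ (Fin n)) (y : EuclideanSpace ℝ (Fin n)) (_ : x ≠ y),
      (‖u x - u y‖₊ : ℝ≥0∞) / edist x y ^ s

/-!
Rescaling carries the block at frequency `2ʲ` to the block at frequency `1`, so each estimate is
proved once, for a fixed Schwartz symbol, and then dilated.

The kernel of a frequency shell has integral zero, so `Δⱼu(x)` only sees the differences
`u(x - 2⁻ʲz) - u(x)`, which are `O(2^{-js}|z|^s)` for `u` in `C^s`; this gives (i).

For (ii), let `Sⱼ` be the multiplier by `χ(2⁻ʲ·)`. Then `S₀ = Δ₋₁`, `Sⱼ₊₁ - Sⱼ = Δⱼ` and `Sⱼu → u`.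
By Bernstein's inequality `Δⱼu` is Lipschitz with constant `O(2^{j(1-s)})`. Since `0 < s < 1`, both
`u - S_J u = O(2^{-Js})` and the Lipschitz constant `O(2^{J(1-s)})` of `S_J u` come from geometric
series, and the choice `2^{-J} ≈ |x - y|` bounds `u(x) - u(y)` by `O(|x - y|^s)`.
-/

namespace LittlewoodPaley

open ContinuousLinearMap Filter Module Set Topology
open scoped BoundedContinuousFunction ContDiff Convolution SchwartzMap

section Translation

variable {V E : Type*} [NormedAddCommGroup V] [NormedSpace ℝ V] [NormedAddCommGroup E]
  [NormedSpace ℝ E]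

theorem enorm_translate_sub_le_lintegral_fderiv {f : V → E} (hf : ContDiff ℝ 1 f) (z h : V) :
    ‖f (z + h) - f z‖ₑ ≤ ∫⁻ t in Icc (0 : ℝ) 1, ‖fderiv ℝ f (z + t • h)‖ₑ * ‖h‖ₑ := by
  have hline (t : ℝ) : HasDerivAt (fun t : ℝ => z + t • h) h t := by
    simpa using ((hasDerivAt_id t).smul_const h).const_add z
  have hderiv (t : ℝ) : deriv (fun t : ℝ => f (z + t • h)) t = fderiv ℝ f (z + t • h) h :=
    ((hf.differentiable one_ne_zero _).hasFDerivAt.comp_hasDerivAt t (hline t)).deriv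
  have hftc := enorm_sub_le_lintegral_deriv_of_contDiffOn_Icc (f := fun t : ℝ => f (z + t • h))
    (a := 0) (b := 1) (hf.comp (by fun_prop)).contDiffOn zero_le_one
  simp only [one_smul, zero_smul, add_zero] at hftc
  refine hftc.trans (lintegral_mono fun t => ?_)
  rw [hderiv]
  exact le_opENorm _ _

theorem lintegral_enorm_translate_sub_le [MeasurableSpace V] [BorelSpace V]
    [SecondCountableTopology V] {μ : Measure V} [SFinite μ] [μ.IsAddRightInvariant] {f : V → E}
    (hf : ContDiff ℝ 1 f) (h : V) :
    ∫⁻ z, ‖f (z + h) - f z‖ₑ ∂μ ≤ (∫⁻ z, ‖fderiv ℝ f z‖ₑ ∂μ) * ‖h‖ₑ := by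
  have hcont : Continuous fun p : V × ℝ => fderiv ℝ f (p.1 + p.2 • h) :=
    (hf.continuous_fderiv one_ne_zero).comp (by fun_prop)
  calc ∫⁻ z, ‖f (z + h) - f z‖ₑ ∂μ
      ≤ ∫⁻ z, (∫⁻ t in Icc (0 : ℝ) 1, ‖fderiv ℝ f (z + t • h)‖ₑ * ‖h‖ₑ) ∂μ :=
        lintegral_mono fun z => enorm_translate_sub_le_lintegral_fderiv hf z h
    _ = ∫⁻ t in Icc (0 : ℝ) 1, (∫⁻ z, ‖fderiv ℝ f (z + t • h)‖ₑ * ‖h‖ₑ ∂μ) :=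
        lintegral_lintegral_swap (hcont.enorm.measurable.mul_const _).aemeasurable
    _ = ∫⁻ _ in Icc (0 : ℝ) 1, (∫⁻ z, ‖fderiv ℝ f z‖ₑ ∂μ) * ‖h‖ₑ := by
        refine lintegral_congr fun t => ?_
        rw [lintegral_mul_const' _ _ enorm_ne_top,
          lintegral_add_right_eq_self (fun z => ‖fderiv ℝ f z‖ₑ)]
    _ = (∫⁻ z, ‖fderiv ℝ f z‖ₑ ∂μ) * ‖h‖ₑ := by simp

theorem integral_norm_translate_sub_le [MeasurableSpace V] [BorelSpace V]
    [SecondCountableTopology V] {μ : Measure V} [SFinite μ] [μ.IsAddRightInvariant] {f : V → E}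
    (hf : ContDiff ℝ 1 f) (hf' : Integrable (fderiv ℝ f) μ) (h : V) :
    ∫ z, ‖f (z + h) - f z‖ ∂μ ≤ (∫ z, ‖fderiv ℝ f z‖ ∂μ) * ‖h‖ := by
  have hmeas : AEStronglyMeasurable (fun z => f (z + h) - f z) μ := by
    have := hf.continuous
    exact Continuous.aestronglyMeasurable (by fun_prop)
  rw [integral_norm_eq_lintegral_enorm hmeas,
    integral_norm_eq_lintegral_enorm hf'.aestronglyMeasurable, ← toReal_enorm h,
    ← ENNReal.toReal_mul]
  exact ENNReal.toReal_mono (ENNReal.mul_ne_top hf'.2.ne enorm_ne_top)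
    (lintegral_enorm_translate_sub_le hf h)

end Translation

theorem norm_convolution_le {G E E' F : Type*} [Sub G] [MeasurableSpace G]
    [NormedAddCommGroup E] [NormedSpace ℝ E] [NormedAddCommGroup E'] [NormedSpace ℝ E']
    [NormedAddCommGroup F] [NormedSpace ℝ F] (L : E →L[ℝ] E' →L[ℝ] F) {μ : Measure G}
    {k : G → E} (hk : Integrable k μ) {f : G → E'} {M : ℝ} (hM : ∀ x, ‖f x‖ ≤ M) (x : G) :
    ‖(k ⋆[L, μ] f) x‖ ≤ ‖L‖ * (∫ z, ‖k z‖ ∂μ) * M := by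
  rw [convolution_def, ← integral_const_mul, ← integral_mul_const]
  exact norm_integral_le_of_norm_le ((hk.norm.const_mul _).mul_const _) <|
    .of_forall fun z => L.le_of_opNorm₂_le_of_le le_rfl le_rfl (hM _)

section Dilation

variable {V : Type*} [NormedAddCommGroup V] [NormedSpace ℝ V]

/-- The symbol `ξ ↦ m(c⁻¹ξ)`: if `m` lives at frequency `1`, its dilation lives at frequency `c`. -/
noncomputable def dilate (c : ℝˣ) (m : 𝓢(V, ℂ)) : 𝓢(V, ℂ) :=
  SchwartzMap.compCLMOfContinuousLinearEquiv ℂ (ContinuousLinearEquiv.smulLeft c⁻¹ : V ≃L[ℝ] V) m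

theorem dilate_apply (c : ℝˣ) (m : 𝓢(V, ℂ)) (ξ : V) : dilate c m ξ = m (c⁻¹ • ξ) := rfl

theorem dilate_one (m : 𝓢(V, ℂ)) : dilate 1 m = m := by
  ext ξ
  simp [dilate_apply]

end Dilation

section Multiplier

variable {V F : Type*} [NormedAddCommGroup V] [InnerProductSpace ℝ V] [FiniteDimensional ℝ V]
  [MeasurableSpace V] [BorelSpace V] [NormedAddCommGroup F] [NormedSpace ℂ F]

/-- The convolution kernel `𝓕⁻¹m` of the Fourier multiplier `m(D)`. -/
noncomputable abbrev kernel (m : 𝓢(V, ℂ)) : 𝓢(V, ℂ) := 𝓕⁻ m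

/-- The Fourier multiplier `m(D)u = 𝓕⁻¹m * u` with Schwartz symbol `m`. Defining it through its
kernel makes it act on bounded continuous functions, whose Fourier transform is only a tempered
distribution. -/
noncomputable def multiplier (m : 𝓢(V, ℂ)) (u : V →ᵇ F) : V →ᵇ F :=
  .ofNormedAddCommGroup (⇑(kernel m) ⋆[lsmul ℝ ℂ] u)
    (BddAbove.continuous_convolution_right_of_integrable _
      ⟨‖u‖, forall_mem_range.2 u.norm_coe_le_norm⟩ (kernel m).integrable u.continuous)
    _ (norm_convolution_le _ (kernel m).integrable u.norm_coe_le_norm)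

theorem coe_multiplier (m : 𝓢(V, ℂ)) (u : V →ᵇ F) :
    ⇑(multiplier m u) = ⇑(kernel m) ⋆[lsmul ℝ ℂ] u := rfl

theorem multiplier_apply (m : 𝓢(V, ℂ)) (u : V →ᵇ F) (x : V) :
    multiplier m u x = ∫ z, kernel m z • u (x - z) := rfl

theorem multiplier_apply_swap (m : 𝓢(V, ℂ)) (u : V →ᵇ F) (x : V) :
    multiplier m u x = ∫ z, kernel m (x - z) • u z :=
  convolution_eq_swap _

theorem norm_multiplier_le (m : 𝓢(V, ℂ)) (u : V →ᵇ F) :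
    ‖multiplier m u‖ ≤ (∫ z, ‖kernel m z‖) * ‖u‖ := by
  refine (BoundedContinuousFunction.norm_le (by positivity)).2 fun x =>
    (norm_convolution_le _ (kernel m).integrable u.norm_coe_le_norm x).trans ?_
  gcongr
  exact mul_le_of_le_one_left (by positivity) opNorm_lsmul_le

theorem integrable_smul_comp (k : 𝓢(V, ℂ)) (u : V →ᵇ F) {g : V → V} (hg : Continuous g) :
    Integrable fun z => k z • u (g z) :=
  k.integrable.smul_bdd ‖u‖ (u.continuous.comp hg).aestronglyMeasurable
    (.of_forall fun _ => u.norm_coe_le_norm _)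

theorem multiplier_add (m₁ m₂ : 𝓢(V, ℂ)) (u : V →ᵇ F) :
    multiplier (m₁ + m₂) u = multiplier m₁ u + multiplier m₂ u := by
  ext x
  simp only [BoundedContinuousFunction.add_apply, multiplier_apply, fourierInv_add, add_apply,
    add_smul]
  exact integral_add (integrable_smul_comp _ u (by fun_prop))
    (integrable_smul_comp _ u (by fun_prop))

theorem norm_multiplier_apply_sub_le (m : 𝓢(V, ℂ)) (u : V →ᵇ F) (x y : V) :
    ‖multiplier m u x - multiplier m u y‖ ≤ (∫ z, ‖fderiv ℝ (kernel m) z‖) * ‖u‖ * ‖x - y‖ := by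
  set k := kernel m
  have hint (w : V) : Integrable fun z => k (w - z) := k.integrable.comp_sub_left w
  have hint_smul (w : V) : Integrable fun z => k (w - z) • u z :=
    (hint w).smul_bdd ‖u‖ (by fun_prop) (.of_forall u.norm_coe_le_norm)
  have htranslate : ∫ z, ‖k (x - z) - k (y - z)‖ = ∫ z, ‖k (z + (x - y)) - k z‖ := by
    rw [← integral_sub_left_eq_self (fun z => ‖k (z + (x - y)) - k z‖) volume y]
    simp
  calc ‖multiplier m u x - multiplier m u y‖
      = ‖∫ z, (k (x - z) - k (y - z)) • u z‖ := by
        simp only [multiplier_apply_swap, sub_smul]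
        rw [integral_sub (hint_smul x) (hint_smul y)]
    _ ≤ ∫ z, ‖k (x - z) - k (y - z)‖ * ‖u‖ :=
        norm_integral_le_of_norm_le (((hint x).sub (hint y)).norm.mul_const _) <|
          .of_forall fun z => by rw [norm_smul]; gcongr; exact u.norm_coe_le_norm z
    _ ≤ (∫ z, ‖fderiv ℝ k z‖) * ‖x - y‖ * ‖u‖ := by
        rw [integral_mul_const, htranslate]
        gcongr
        exact integral_norm_translate_sub_le (k.smooth 1)
          (SchwartzMap.fderivCLM ℝ V ℂ k).integrable _
    _ = (∫ z, ‖fderiv ℝ k z‖) * ‖u‖ * ‖x - y‖ := mul_right_comm _ _ _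

theorem kernel_convolution_kernel {m m₁ m₂ : 𝓢(V, ℂ)} (hm : ∀ ξ, m ξ = m₁ ξ * m₂ ξ) :
    ⇑(kernel m₁) ⋆[mul ℝ ℂ] ⇑(kernel m₂) = kernel m := by
  have h : SchwartzMap.convolution (mul ℂ ℂ) (kernel m₁) (kernel m₂) = kernel m := by
    refine (fourierCLE ℂ 𝓢(V, ℂ)).injective ?_
    ext ξ
    simp [SchwartzMap.fourier_convolution, hm]
  ext x
  rw [← h]
  exact (SchwartzMap.convolution_apply (mul ℂ ℂ) (kernel m₁) (kernel m₂) x).symm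

theorem multiplier_multiplier [CompleteSpace F] {m m₁ m₂ : 𝓢(V, ℂ)}
    (hm : ∀ ξ, m ξ = m₁ ξ * m₂ ξ) (u : V →ᵇ F) :
    multiplier m₁ (multiplier m₂ u) = multiplier m u := by
  ext x
  rw [coe_multiplier, coe_multiplier, coe_multiplier, ← kernel_convolution_kernel hm]
  have hk : Integrable (fun p : V × V => kernel m₁ p.2 * kernel m₂ (p.1 - p.2)) :=
    (kernel m₁).integrable.convolution_integrand (mul ℝ ℂ) (kernel m₂).integrable
  refine (convolution_assoc' (mul ℝ ℂ) (lsmul ℝ ℂ) (lsmul ℝ ℂ) (lsmul ℝ ℂ)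
    (fun a b c => mul_smul a b c) (.of_forall fun y => ?_)
    (.of_forall fun y => integrable_smul_comp (kernel m₂) u (by fun_prop)) ?_).symm
  · exact integrable_smul_comp (kernel m₁) (kernel m₂).toBoundedContinuousFunction
      (continuous_const.sub continuous_id)
  · exact (hk.smul_bdd (f := fun p : V × V => u (x - p.1)) ‖u‖
      (Continuous.aestronglyMeasurable (by fun_prop))
      (.of_forall fun _ => u.norm_coe_le_norm _)).congr (.of_forall fun _ => mul_smul _ _ _)

theorem integral_kernel (m : 𝓢(V, ℂ)) : ∫ z, kernel m z = m 0 := by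
  have h : 𝓕 (kernel m) 0 = m 0 := by simp
  rw [← h, SchwartzMap.fourier_coe, Real.fourier_eq]
  simp

theorem exists_norm_multiplier_apply_sub_le [CompleteSpace F] {m : 𝓢(V, ℂ)}
    (hm : HasCompactSupport m) :
    ∃ A : ℝ, 0 ≤ A ∧ ∀ (u : V →ᵇ F) (x y : V),
      ‖multiplier m u x - multiplier m u y‖ ≤ A * ‖multiplier m u‖ * ‖x - y‖ := by
  obtain ⟨R, hR0, hR⟩ := hm.isBounded.subset_closedBall_lt 0 0
  let bump : ContDiffBump (0 : V) := ⟨R, R + 1, hR0, by linarith⟩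
  let cutoff : 𝓢(V, ℂ) := (bump.hasCompactSupport.comp_left Complex.ofReal_zero).toSchwartzMap
    (Complex.ofRealCLM.contDiff.comp bump.contDiff)
  have hcutoff (ξ : V) : m ξ = cutoff ξ * m ξ := by
    rcases eq_or_ne (m ξ) 0 with h | h
    · simp [h]
    · have : bump ξ = 1 := bump.one_of_mem_closedBall (hR (subset_tsupport _ h))
      have : cutoff ξ = 1 := congrArg Complex.ofReal this
      simp [this]
  refine ⟨∫ z, ‖fderiv ℝ (kernel cutoff) z‖, by positivity, fun u x y => ?_⟩
  simpa only [multiplier_multiplier hcutoff] using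
    norm_multiplier_apply_sub_le cutoff (multiplier m u) x y

theorem kernel_dilate_apply (c : ℝˣ) (m : 𝓢(V, ℂ)) (x : V) :
    kernel (dilate c m) x = |(c : ℝ)| ^ finrank ℝ V • kernel m (c • x) := by
  have h := Measure.integral_comp_inv_smul (volume : Measure V)
    (fun v => Real.fourierChar (inner ℝ v (c • x)) • m v) c
  rw [abs_pow] at h
  rw [SchwartzMap.fourierInv_coe, SchwartzMap.fourierInv_coe, Real.fourierInv_eq,
    Real.fourierInv_eq, ← h]
  refine integral_congr_ae (.of_forall fun v => ?_)
  simp [dilate_apply, Units.smul_def, inner_smul_left, inner_smul_right]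

theorem multiplier_dilate_apply (c : ℝˣ) (m : 𝓢(V, ℂ)) (u : V →ᵇ F) (x : V) :
    multiplier (dilate c m) u x = ∫ z, kernel m z • u (x - c⁻¹ • z) := by
  have hc : |(c : ℝ)| ^ finrank ℝ V ≠ 0 := pow_ne_zero _ (abs_ne_zero.2 c.ne_zero)
  have h := Measure.integral_comp_smul volume (fun z => kernel m z • u (x - c⁻¹ • z)) (c : ℝ)
  rw [abs_inv, abs_pow, eq_inv_smul_iff₀ hc, ← integral_smul] at h
  rw [← h, multiplier_apply]
  refine integral_congr_ae (.of_forall fun z => ?_)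
  simp [kernel_dilate_apply, Units.smul_def, -Complex.real_smul, smul_assoc]

theorem multiplier_dilate_eq_multiplier_rescale (c : ℝˣ) (m : 𝓢(V, ℂ)) (u : V →ᵇ F) (x : V) :
    multiplier (dilate c m) u x =
      multiplier m (u.compContinuous ⟨(c⁻¹ • ·), continuous_const_smul _⟩) (c • x) := by
  rw [multiplier_dilate_apply, multiplier_apply]
  simp [smul_sub]

theorem exists_bernstein [CompleteSpace F] {m : 𝓢(V, ℂ)} (hm : HasCompactSupport m) :
    ∃ A : ℝ, 0 ≤ A ∧ ∀ (c : ℝˣ) (u : V →ᵇ F) (x y : V),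
      ‖multiplier (dilate c m) u x - multiplier (dilate c m) u y‖ ≤
        A * ‖multiplier (dilate c m) u‖ * (|(c : ℝ)| * ‖x - y‖) := by
  obtain ⟨A, hA0, hA⟩ := exists_norm_multiplier_apply_sub_le (F := F) hm
  refine ⟨A, hA0, fun c u x y => ?_⟩
  set v := u.compContinuous ⟨(c⁻¹ • · : V → V), continuous_const_smul _⟩
  have hv : ‖multiplier m v‖ ≤ ‖multiplier (dilate c m) u‖ := by
    refine (BoundedContinuousFunction.norm_le (norm_nonneg _)).2 fun z => ?_
    rw [← smul_inv_smul c z, ← multiplier_dilate_eq_multiplier_rescale]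
    exact BoundedContinuousFunction.norm_coe_le_norm _ _
  calc ‖multiplier (dilate c m) u x - multiplier (dilate c m) u y‖
      = ‖multiplier m v (c • x) - multiplier m v (c • y)‖ := by
        rw [multiplier_dilate_eq_multiplier_rescale, multiplier_dilate_eq_multiplier_rescale]
    _ ≤ A * ‖multiplier m v‖ * ‖c • x - c • y‖ := hA v _ _
    _ ≤ A * ‖multiplier (dilate c m) u‖ * (|(c : ℝ)| * ‖x - y‖) := by
        rw [← smul_sub, Units.smul_def, norm_smul, Real.norm_eq_abs]
        gcongr

theorem tendsto_multiplier_dilate [CompleteSpace F] {m : 𝓢(V, ℂ)} (hm : m 0 = 1) (u : V →ᵇ F)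
    {ι : Type*} {l : Filter ι} [l.IsCountablyGenerated] {c : ι → ℝˣ}
    (hc : Tendsto (fun i => ((c i)⁻¹ : ℝˣ).val) l (𝓝 0)) (x : V) :
    Tendsto (fun i => multiplier (dilate (c i) m) u x) l (𝓝 (u x)) := by
  have hux : u x = ∫ z, kernel m z • u x := by
    rw [integral_smul_const, integral_kernel, hm, one_smul]
  simp only [multiplier_dilate_apply]
  rw [hux]
  refine tendsto_integral_filter_of_dominated_convergence (fun z => ‖kernel m z‖ * ‖u‖)
    (.of_forall fun i => Continuous.aestronglyMeasurable (by fun_prop))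
    (.of_forall fun i => .of_forall fun z => ?_) ((kernel m).integrable.norm.mul_const _)
    (.of_forall fun z => ?_)
  · rw [norm_smul]
    gcongr
    exact u.norm_coe_le_norm _
  · have hshift : Tendsto (fun i => x - ((c i)⁻¹ : ℝˣ).val • z) l (𝓝 x) := by
      simpa using tendsto_const_nhds.sub (hc.smul_const z)
    exact ((u.continuous.tendsto x).comp hshift).const_smul _

theorem integrable_norm_rpow_mul_norm (f : 𝓢(V, ℂ)) {s : ℝ} (hs0 : 0 ≤ s) :
    Integrable fun z => ‖z‖ ^ s * ‖f z‖ := by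
  have hbound (r : ℝ) (hr : 0 ≤ r) : r ^ s ≤ r ^ 0 + r ^ ⌈s⌉₊ := by
    rcases le_total r 1 with h | h
    · rw [pow_zero]
      exact (Real.rpow_le_one hr h hs0).trans (le_add_of_nonneg_right (by positivity))
    · rw [← Real.rpow_natCast r ⌈s⌉₊]
      exact (Real.rpow_le_rpow_of_exponent_le h (Nat.le_ceil s)).trans
        (le_add_of_nonneg_left (by positivity))
  refine ((f.integrable_pow_mul volume 0).add (f.integrable_pow_mul volume ⌈s⌉₊)).mono'
    ((continuous_norm.rpow_const fun _ => .inr hs0).mul f.continuous.norm).aestronglyMeasurable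
    (.of_forall fun z => ?_)
  rw [Real.norm_of_nonneg (by positivity)]
  simp only [Pi.add_apply, ← add_mul]
  gcongr
  exact hbound _ (norm_nonneg z)

theorem norm_multiplier_dilate_apply_le_of_holder [CompleteSpace F] {m : 𝓢(V, ℂ)} (hm : m 0 = 0)
    {u : V →ᵇ F} {s H : ℝ} (hs0 : 0 ≤ s) (hu : ∀ x y, ‖u x - u y‖ ≤ H * ‖x - y‖ ^ s) (c : ℝˣ)
    (x : V) :
    ‖multiplier (dilate c m) u x‖ ≤ (∫ z, ‖z‖ ^ s * ‖kernel m z‖) * H * |(c : ℝ)| ^ (-s) := by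
  have hcancel : multiplier (dilate c m) u x = ∫ z, kernel m z • (u (x - c⁻¹ • z) - u x) := by
    simp only [multiplier_dilate_apply, smul_sub]
    rw [integral_sub (integrable_smul_comp _ u (by fun_prop)) ((kernel m).integrable.smul_const _),
      integral_smul_const, integral_kernel, hm, zero_smul, sub_zero]
  rw [hcancel, mul_assoc, ← integral_mul_const]
  refine norm_integral_le_of_norm_le ((integrable_norm_rpow_mul_norm _ hs0).mul_const _)
    (.of_forall fun z => ?_)
  have hz := hu (x - c⁻¹ • z) x
  have hscale : ‖c⁻¹ • z‖ = |(c : ℝ)|⁻¹ * ‖z‖ := by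
    rw [Units.smul_def, norm_smul, Units.val_inv_eq_inv_val, norm_inv, Real.norm_eq_abs]
  rw [sub_sub_cancel_left, norm_neg, hscale, Real.mul_rpow (by positivity) (norm_nonneg z),
    Real.inv_rpow (abs_nonneg _), ← Real.rpow_neg (abs_nonneg _)] at hz
  calc ‖kernel m z • (u (x - c⁻¹ • z) - u x)‖
      ≤ ‖kernel m z‖ * (H * (|(c : ℝ)| ^ (-s) * ‖z‖ ^ s)) := by
        rw [norm_smul]
        gcongr
    _ = ‖z‖ ^ s * ‖kernel m z‖ * (H * |(c : ℝ)| ^ (-s)) := by ring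

end Multiplier

section DyadicApproximation

theorem le_mul_pow_of_le_add_mul_pow {𝕜 : Type*} [Field 𝕜] [LinearOrder 𝕜] [IsStrictOrderedRing 𝕜]
    {a : ℕ → 𝕜} {B r : 𝕜} (hB : 0 ≤ B) (hr : 1 < r) (h0 : a 0 ≤ B)
    (hstep : ∀ j, a (j + 1) ≤ a j + B * r ^ j) (j : ℕ) : a j ≤ B * r / (r - 1) * r ^ j := by
  have hr' : 0 < r - 1 := sub_pos.2 hr
  induction j with
  | zero =>
    rw [pow_zero, mul_one]
    refine h0.trans ((le_div_iff₀ hr').2 ?_)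
    gcongr
    linarith
  | succ j ih =>
    calc a (j + 1) ≤ B * r / (r - 1) * r ^ j + B * r ^ j := (hstep j).trans (by gcongr)
      _ ≤ B * r / (r - 1) * r ^ j + B * r * r ^ j := by
        gcongr
        exact le_mul_of_one_le_right hB hr.le
      _ = B * r / (r - 1) * r ^ (j + 1) := by
        field_simp
        ring

variable {X E : Type*} {s : ℝ}

/- The points are compared at the scale `2⁻ᴶ ≈ dist x y`, where the approximation error and the
Lipschitz bound balance. -/
theorem dist_le_of_dyadic_approx [MetricSpace X] [PseudoMetricSpace E] {T : ℕ → X → E} {u : X → E}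
    {A : ℝ} (hs0 : 0 < s) (hs1 : s ≤ 1)
    (happrox : ∀ j x, dist (T j x) (u x) ≤ A * (2 ^ (-s)) ^ j)
    (hlip : ∀ j x y, dist (T j x) (T j y) ≤ A * (2 ^ (1 - s)) ^ j * dist x y) {x y : X}
    (hxy : dist x y ≤ 1) : dist (u x) (u y) ≤ 6 * A * dist x y ^ s := by
  have hA : 0 ≤ A := dist_nonneg.trans (by simpa using happrox 0 x)
  rcases eq_or_ne x y with rfl | hne
  · simp [hs0.ne']
  obtain ⟨J, hJ, hJ'⟩ := exists_nat_pow_near_of_lt_one (dist_pos.2 hne) hxy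
    (one_half_pos (α := ℝ)) one_half_lt_one
  set r := dist x y
  have hr : 0 ≤ r := dist_nonneg
  have hsmall : (2 ^ (-s)) ^ J ≤ 2 * r ^ s := by
    calc ((2 : ℝ) ^ (-s)) ^ J = ((1 / 2) ^ J) ^ s := by
          rw [Real.rpow_neg two_pos.le, ← Real.inv_rpow two_pos.le, Real.rpow_pow_comm (by simp),
            one_div]
      _ ≤ (2 * r) ^ s := by
          gcongr
          rw [pow_succ] at hJ
          linarith
      _ ≤ 2 * r ^ s := by
          rw [Real.mul_rpow two_pos.le hr]
          gcongr
          exact Real.rpow_le_self_of_one_le one_le_two hs1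
  have hlarge : (2 ^ (1 - s)) ^ J * r ≤ (2 ^ (-s)) ^ J := by
    calc ((2 : ℝ) ^ (1 - s)) ^ J * r = (2 ^ (-s)) ^ J * (2 ^ J * r) := by
          rw [sub_eq_neg_add, Real.rpow_add_one two_ne_zero, mul_pow, mul_assoc]
      _ ≤ (2 ^ (-s)) ^ J * (2 ^ J * (1 / 2) ^ J) := by gcongr
      _ = (2 ^ (-s)) ^ J := by rw [← mul_pow]; norm_num
  calc dist (u x) (u y) ≤ dist (u x) (T J x) + dist (T J x) (T J y) + dist (T J y) (u y) :=
        dist_triangle4 _ _ _ _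
    _ ≤ A * (2 ^ (-s)) ^ J + A * (2 ^ (-s)) ^ J + A * (2 ^ (-s)) ^ J := by
        gcongr
        · rw [dist_comm]
          exact happrox J x
        · refine (hlip J x y).trans ?_
          rw [mul_assoc]
          gcongr
        · exact happrox J y
    _ = 3 * A * (2 ^ (-s)) ^ J := by ring
    _ ≤ 3 * A * (2 * r ^ s) := by gcongr
    _ = 6 * A * r ^ s := by ring

theorem dist_le_of_dyadic_increments [MetricSpace X] [SeminormedAddCommGroup E] {T : ℕ → X → E}
    {u : X → E} {A : ℝ} (hs0 : 0 < s) (hs1 : s < 1)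
    (hlim : ∀ x, Tendsto (T · x) atTop (𝓝 (u x)))
    (hT0 : ∀ x y, dist (T 0 x) (T 0 y) ≤ A * dist x y)
    (hinc : ∀ j x, ‖T (j + 1) x - T j x‖ ≤ A * (2 ^ (-s)) ^ j)
    (hinc_lip : ∀ j x y, dist (T (j + 1) x - T j x) (T (j + 1) y - T j y) ≤
      A * (2 ^ (1 - s)) ^ j * dist x y) {x y : X} (hxy : dist x y ≤ 1) :
    dist (u x) (u y) ≤
      6 * (A / (1 - 2 ^ (-s)) + A * 2 ^ (1 - s) / (2 ^ (1 - s) - 1)) * dist x y ^ s := by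
  have hA : 0 ≤ A := (norm_nonneg _).trans (by simpa using hinc 0 x)
  have hρ : (2 : ℝ) ^ (-s) < 1 := Real.rpow_lt_one_of_one_lt_of_neg one_lt_two (by linarith)
  have hσ : 1 < (2 : ℝ) ^ (1 - s) := Real.one_lt_rpow one_lt_two (by linarith)
  have hA₁ : 0 ≤ A / (1 - 2 ^ (-s)) := div_nonneg hA (sub_pos.2 hρ).le
  have hA₂ : 0 ≤ A * 2 ^ (1 - s) / (2 ^ (1 - s) - 1) := div_nonneg (by positivity) (sub_pos.2 hσ).le
  refine dist_le_of_dyadic_approx (T := T) hs0 hs1.le (fun j x => ?_) (fun j x y => ?_) hxy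
  · calc dist (T j x) (u x) ≤ A * (2 ^ (-s)) ^ j / (1 - 2 ^ (-s)) :=
          dist_le_of_le_geometric_of_tendsto _ _ hρ
            (fun j => by rw [dist_eq_norm_sub']; exact hinc j x) (hlim x) j
      _ = A / (1 - 2 ^ (-s)) * (2 ^ (-s)) ^ j := by ring
      _ ≤ _ := by
          gcongr
          exact le_add_of_nonneg_right hA₂
  · calc dist (T j x) (T j y)
        ≤ A * dist x y * 2 ^ (1 - s) / (2 ^ (1 - s) - 1) * (2 ^ (1 - s)) ^ j := by
          refine le_mul_pow_of_le_add_mul_pow (a := fun j => dist (T j x) (T j y)) (by positivity)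
            hσ (hT0 x y) (fun j => ?_) j
          calc dist (T (j + 1) x) (T (j + 1) y)
              = dist (T j x + (T (j + 1) x - T j x)) (T j y + (T (j + 1) y - T j y)) := by simp
            _ ≤ dist (T j x) (T j y) + dist (T (j + 1) x - T j x) (T (j + 1) y - T j y) :=
              dist_add_add_le _ _ _ _
            _ ≤ dist (T j x) (T j y) + A * dist x y * (2 ^ (1 - s)) ^ j := by
              rw [mul_right_comm]
              gcongr
              exact hinc_lip j x y
      _ = A * 2 ^ (1 - s) / (2 ^ (1 - s) - 1) * (2 ^ (1 - s)) ^ j * dist x y := by ring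
      _ ≤ _ := by
          gcongr
          exact le_add_of_nonneg_left hA₁

end DyadicApproximation

section DyadicShell

variable {V : Type*} [NormedAddCommGroup V] [NormedSpace ℝ V]

/-- The frequency scale `2ʲ`, as an element of the group of dilations. -/
noncomputable def dyadic (j : ℕ) : ℝˣ := Units.mk0 2 two_ne_zero ^ j

theorem coe_dyadic (j : ℕ) : (dyadic j : ℝ) = 2 ^ j := by
  simp [dyadic]

theorem dyadic_zero : dyadic 0 = 1 := pow_zero _

theorem tendsto_inv_dyadic : Tendsto (fun j => ((dyadic j)⁻¹ : ℝˣ).val) atTop (𝓝 0) := by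
  simpa [coe_dyadic, comp_def] using tendsto_inv_atTop_zero.comp
    (tendsto_pow_atTop_atTop_of_one_lt (one_lt_two (α := ℝ)))

/-- The symbol `a(ξ/2) - a(ξ)` of the frequency shell between two consecutive dyadic dilations of
the low-frequency symbol `a`. -/
noncomputable def shell (a : 𝓢(V, ℂ)) : 𝓢(V, ℂ) := dilate (dyadic 1) a - a

theorem shell_apply (a : 𝓢(V, ℂ)) (ξ : V) : shell a ξ = a ((2 : ℝ)⁻¹ • ξ) - a ξ := by
  simp [shell, dilate_apply, Units.smul_def, coe_dyadic]

theorem shell_apply_zero (a : 𝓢(V, ℂ)) : shell a 0 = 0 := by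
  simp [shell_apply]

theorem hasCompactSupport_shell {a : 𝓢(V, ℂ)} (ha : HasCompactSupport a) :
    HasCompactSupport (shell a) := by
  have hdilate : HasCompactSupport fun ξ => a ((2 : ℝ)⁻¹ • ξ) := ha.comp_smul (by norm_num)
  rw [funext (shell_apply a)]
  exact hdilate.sub ha

theorem dilate_dyadic_succ (a : 𝓢(V, ℂ)) (j : ℕ) :
    dilate (dyadic (j + 1)) a = dilate (dyadic j) a + dilate (dyadic j) (shell a) := by
  ext ξ
  simp [dilate_apply, shell_apply, Units.smul_def, coe_dyadic, pow_succ', smul_smul, mul_comm]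

end DyadicShell

section DyadicBlocks

variable {V F : Type*} [NormedAddCommGroup V] [InnerProductSpace ℝ V] [FiniteDimensional ℝ V]
  [MeasurableSpace V] [BorelSpace V] [NormedAddCommGroup F] [NormedSpace ℂ F]
  {a : 𝓢(V, ℂ)} {s M : ℝ} {u : V →ᵇ F}

theorem multiplier_dilate_dyadic_succ (a : 𝓢(V, ℂ)) (u : V →ᵇ F) (j : ℕ) :
    multiplier (dilate (dyadic (j + 1)) a) u =
      multiplier (dilate (dyadic j) a) u + multiplier (dilate (dyadic j) (shell a)) u := by
  rw [dilate_dyadic_succ, multiplier_add]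

/-- `u` has size at most `H` in the Hölder space `C^s`: both the supremum norm and the Hölder
seminorm are bounded by `H`. -/
structure IsHolderBounded (s H : ℝ) (u : V →ᵇ F) : Prop where
  norm_le : ‖u‖ ≤ H
  norm_sub_le (x y : V) : ‖u x - u y‖ ≤ H * ‖x - y‖ ^ s

/-- `u` has size at most `M` in the Besov space `B^s_{∞,∞}` built on the low-frequency symbol `a`:
`2^{js}‖Δⱼu‖ ≤ M` for `j ≥ -1`, where `Δ₋₁ = a(D)` and `Δⱼ` is the shell at frequency `2ʲ`. -/
structure IsBesovBounded (a : 𝓢(V, ℂ)) (s M : ℝ) (u : V →ᵇ F) : Prop where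
  norm_low_le : ‖multiplier a u‖ ≤ M * 2 ^ s
  norm_shell_le (j : ℕ) : ‖multiplier (dilate (dyadic j) (shell a)) u‖ ≤ M * (2 ^ (-s)) ^ j

theorem exists_isBesovBounded_of_isHolderBounded [CompleteSpace F] (a : 𝓢(V, ℂ)) (hs0 : 0 ≤ s) :
    ∃ C : ℝ, 0 ≤ C ∧ ∀ (u : V →ᵇ F) (H : ℝ),
      IsHolderBounded s H u → IsBesovBounded a s (C * H) u := by
  set A := ∫ z, ‖kernel a z‖
  set B := ∫ z, ‖z‖ ^ s * ‖kernel (shell a) z‖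
  have hA : 0 ≤ A := by positivity
  have hB : 0 ≤ B := by positivity
  refine ⟨A + B, by positivity, fun u H hu => ?_⟩
  have hH : 0 ≤ H := (norm_nonneg u).trans hu.norm_le
  constructor
  · calc ‖multiplier a u‖ ≤ A * ‖u‖ := norm_multiplier_le a u
      _ ≤ (A + B) * H := by
        gcongr
        exacts [le_add_of_nonneg_right hB, hu.norm_le]
      _ ≤ (A + B) * H * 2 ^ s :=
        le_mul_of_one_le_right (by positivity) (Real.one_le_rpow one_le_two hs0)
  · intro j
    refine (BoundedContinuousFunction.norm_le (by positivity)).2 fun x => ?_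
    calc ‖multiplier (dilate (dyadic j) (shell a)) u x‖
        ≤ B * H * |(dyadic j : ℝ)| ^ (-s) :=
          norm_multiplier_dilate_apply_le_of_holder (shell_apply_zero a) hs0 hu.norm_sub_le _ x
      _ = B * H * (2 ^ (-s)) ^ j := by
          rw [coe_dyadic, abs_of_pos (by positivity), Real.rpow_pow_comm two_pos.le]
      _ ≤ (A + B) * H * (2 ^ (-s)) ^ j := by
          gcongr
          exact le_add_of_nonneg_left hA

theorem IsBesovBounded.nonneg (hu : IsBesovBounded a s M u) : 0 ≤ M :=
  nonneg_of_mul_nonneg_left ((norm_nonneg _).trans hu.norm_low_le) (by positivity)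

theorem tendsto_multiplier_dyadic [CompleteSpace F] (ha : a 0 = 1) (u : V →ᵇ F) (x : V) :
    Tendsto (fun j => multiplier (dilate (dyadic j) a) u x) atTop (𝓝 (u x)) :=
  tendsto_multiplier_dilate ha u tendsto_inv_dyadic x

theorem IsBesovBounded.norm_increment_le (hu : IsBesovBounded a s M u) (j : ℕ) (x : V) :
    ‖multiplier (dilate (dyadic (j + 1)) a) u x - multiplier (dilate (dyadic j) a) u x‖ ≤
      M * (2 ^ (-s)) ^ j := by
  rw [multiplier_dilate_dyadic_succ, BoundedContinuousFunction.add_apply, add_sub_cancel_left]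
  exact (BoundedContinuousFunction.norm_coe_le_norm _ x).trans (hu.norm_shell_le j)

theorem IsBesovBounded.norm_le [CompleteSpace F] (ha : a 0 = 1) (hs0 : 0 < s)
    (hu : IsBesovBounded a s M u) : ‖u‖ ≤ (2 ^ s + 1 / (1 - 2 ^ (-s))) * M := by
  have hρ : (2 : ℝ) ^ (-s) < 1 := Real.rpow_lt_one_of_one_lt_of_neg one_lt_two (by linarith)
  have hM := hu.nonneg
  refine (BoundedContinuousFunction.norm_le (mul_nonneg (add_nonneg (by positivity)
    (one_div_nonneg.2 (sub_pos.2 hρ).le)) hM)).2 fun x => ?_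
  have hlow : ‖multiplier (dilate (dyadic 0) a) u x‖ ≤ M * 2 ^ s := by
    rw [dyadic_zero, dilate_one]
    exact (BoundedContinuousFunction.norm_coe_le_norm _ x).trans hu.norm_low_le
  have htail : dist (multiplier (dilate (dyadic 0) a) u x) (u x) ≤ M / (1 - 2 ^ (-s)) :=
    dist_le_of_le_geometric_of_tendsto₀ _ _ hρ
      (fun j => by rw [dist_eq_norm_sub']; exact hu.norm_increment_le j x)
      (tendsto_multiplier_dyadic ha u x)
  calc ‖u x‖ ≤ ‖multiplier (dilate (dyadic 0) a) u x‖ +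
        dist (multiplier (dilate (dyadic 0) a) u x) (u x) := by
        rw [dist_eq_norm]
        exact norm_le_norm_add_norm_sub _ _
    _ ≤ M * 2 ^ s + M / (1 - 2 ^ (-s)) := add_le_add hlow htail
    _ = (2 ^ s + 1 / (1 - 2 ^ (-s))) * M := by ring

theorem exists_lipschitz_of_isBesovBounded [CompleteSpace F] (hac : HasCompactSupport a) (s : ℝ) :
    ∃ D : ℝ, 1 ≤ D ∧ ∀ (u : V →ᵇ F) (M : ℝ), IsBesovBounded a s M u → ∀ x y,
      ‖multiplier a u x - multiplier a u y‖ ≤ D * M * ‖x - y‖ ∧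
      ∀ j, ‖multiplier (dilate (dyadic j) (shell a)) u x -
        multiplier (dilate (dyadic j) (shell a)) u y‖ ≤ D * M * (2 ^ (1 - s)) ^ j * ‖x - y‖ := by
  obtain ⟨A, hA0, hA⟩ := exists_norm_multiplier_apply_sub_le (F := F) hac
  obtain ⟨B, hB0, hB⟩ := exists_bernstein (F := F) (hasCompactSupport_shell hac)
  have hA' : 0 ≤ A * 2 ^ s := by positivity
  refine ⟨1 + A * 2 ^ s + B, by linarith, fun u M hu x y => ⟨?_, fun j => ?_⟩⟩ <;>
    have hM := hu.nonneg
  · calc ‖multiplier a u x - multiplier a u y‖ ≤ A * (M * 2 ^ s) * ‖x - y‖ :=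
          (hA u x y).trans (by gcongr; exact hu.norm_low_le)
      _ = A * 2 ^ s * M * ‖x - y‖ := by ring
      _ ≤ (1 + A * 2 ^ s + B) * M * ‖x - y‖ := by
          gcongr
          linarith
  · calc _ ≤ B * (M * (2 ^ (-s)) ^ j) * (2 ^ j * ‖x - y‖) := by
          refine (hB (dyadic j) u x y).trans ?_
          rw [coe_dyadic, abs_of_pos (by positivity)]
          gcongr
          exact hu.norm_shell_le j
      _ = B * M * (2 ^ (1 - s)) ^ j * ‖x - y‖ := by
          rw [sub_eq_neg_add 1 s, Real.rpow_add_one two_ne_zero, mul_pow]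
          ring
      _ ≤ (1 + A * 2 ^ s + B) * M * (2 ^ (1 - s)) ^ j * ‖x - y‖ := by
          gcongr
          linarith

theorem exists_norm_sub_le_of_isBesovBounded [CompleteSpace F] (hac : HasCompactSupport a)
    (ha : a 0 = 1) (hs0 : 0 < s) (hs1 : s < 1) :
    ∃ K : ℝ, 0 ≤ K ∧ ∀ (u : V →ᵇ F) (M : ℝ), IsBesovBounded a s M u →
      ∀ x y, ‖x - y‖ ≤ 1 → ‖u x - u y‖ ≤ K * M * ‖x - y‖ ^ s := by
  obtain ⟨D, hD1, hD⟩ := exists_lipschitz_of_isBesovBounded (F := F) hac s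
  have : 0 ≤ D := zero_le_one.trans hD1
  have hρ : 0 < 1 - (2 : ℝ) ^ (-s) :=
    sub_pos.2 (Real.rpow_lt_one_of_one_lt_of_neg one_lt_two (by linarith))
  have hσ : 0 < (2 : ℝ) ^ (1 - s) - 1 := sub_pos.2 (Real.one_lt_rpow one_lt_two (by linarith))
  refine ⟨6 * (D / (1 - 2 ^ (-s)) + D * 2 ^ (1 - s) / (2 ^ (1 - s) - 1)), by positivity,
    fun u M hu x y hxy => ?_⟩
  have hM := hu.nonneg
  have h : dist (u x) (u y) ≤ _ := dist_le_of_dyadic_increments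
    (T := fun j x => multiplier (dilate (dyadic j) a) u x) (A := D * M) hs0 hs1
    (tendsto_multiplier_dyadic ha u) (fun x y => ?_) (fun j x => ?_) (fun j x y => ?_)
    (by rwa [dist_eq_norm])
  · rw [dist_eq_norm, dist_eq_norm] at h
    exact h.trans_eq (by ring)
  · rw [dyadic_zero, dilate_one, dist_eq_norm, dist_eq_norm]
    exact (hD u M hu x y).1
  · refine (hu.norm_increment_le j x).trans ?_
    gcongr
    exact le_mul_of_one_le_left hM hD1
  · simp only [multiplier_dilate_dyadic_succ, BoundedContinuousFunction.add_apply,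
      add_sub_cancel_left, dist_eq_norm]
    exact (hD u M hu x y).2 j

theorem exists_isHolderBounded_of_isBesovBounded [CompleteSpace F] (hac : HasCompactSupport a)
    (ha : a 0 = 1) (hs0 : 0 < s) (hs1 : s < 1) :
    ∃ C : ℝ, 0 ≤ C ∧ ∀ (u : V →ᵇ F) (M : ℝ),
      IsBesovBounded a s M u → IsHolderBounded s (C * M) u := by
  obtain ⟨K, hK0, hK⟩ := exists_norm_sub_le_of_isBesovBounded (F := F) hac ha hs0 hs1
  set S : ℝ := 2 ^ s + 1 / (1 - 2 ^ (-s))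
  have hS : 0 ≤ S := add_nonneg (by positivity) <| one_div_nonneg.2 <| sub_nonneg.2 <|
    Real.rpow_le_one_of_one_le_of_nonpos one_le_two (by linarith)
  refine ⟨K + 2 * S, by positivity, fun u M hu => ?_⟩
  have hM := hu.nonneg
  have hsup : ‖u‖ ≤ S * M := hu.norm_le ha hs0
  refine ⟨hsup.trans (by gcongr; linarith), fun x y => ?_⟩
  rcases le_total ‖x - y‖ 1 with hxy | hxy
  · refine (hK u M hu x y hxy).trans ?_
    gcongr
    linarith
  · calc ‖u x - u y‖ ≤ ‖u‖ + ‖u‖ :=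
          norm_sub_le_of_le (u.norm_coe_le_norm x) (u.norm_coe_le_norm y)
      _ ≤ S * M + S * M := add_le_add hsup hsup
      _ = 2 * S * M := by ring
      _ ≤ (K + 2 * S) * M := by
          gcongr
          linarith
      _ ≤ (K + 2 * S) * M * ‖x - y‖ ^ s :=
          le_mul_of_one_le_right (by positivity) (Real.one_le_rpow hxy hs0.le)

end DyadicBlocks

section DyadicPartition

variable {V : Type*} [NormedAddCommGroup V] [NormedSpace ℝ V] {χ φ : V → ℝ}

/-- `χ + ∑ⱼ φ(2⁻ʲ·) = 1` is an inhomogeneous dyadic partition of unity, with `χ` smooth and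
compactly supported. As `φ` vanishes near the origin, the sum is finite at every point, so the
junk value of a divergent `tsum` never occurs. -/
structure IsDyadicPartition (χ φ : V → ℝ) : Prop where
  contDiff_low : ContDiff ℝ ∞ χ
  hasCompactSupport_low : HasCompactSupport χ
  eventually_shell_eq_zero : ∀ᶠ ξ in 𝓝 0, φ ξ = 0
  add_tsum_eq_one (ξ : V) : χ ξ + ∑' j : ℕ, φ ((2 : ℝ) ^ (-(j : ℤ)) • ξ) = 1

namespace IsDyadicPartition

theorem of_support_subset [ProperSpace V] (hχ : ContDiff ℝ ∞ χ) {r R : ℝ} (hr : 0 < r)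
    (hχ_supp : ∀ ξ, χ ξ ≠ 0 → ‖ξ‖ ≤ R) (hφ_supp : ∀ ξ, φ ξ ≠ 0 → r ≤ ‖ξ‖)
    (hsum : ∀ ξ, χ ξ + ∑' j : ℕ, φ ((2 : ℝ) ^ (-(j : ℤ)) • ξ) = 1) :
    IsDyadicPartition χ φ where
  contDiff_low := hχ
  hasCompactSupport_low := .of_support_subset_isCompact (isCompact_closedBall 0 R) fun ξ hξ =>
    mem_closedBall_zero_iff.2 (hχ_supp ξ hξ)
  eventually_shell_eq_zero := by
    filter_upwards [Metric.ball_mem_nhds 0 hr] with ξ hξ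
    exact of_not_not fun hne => (hφ_supp ξ hne).not_gt (mem_ball_zero_iff.1 hξ)
  add_tsum_eq_one := hsum

theorem summable (h : IsDyadicPartition χ φ) (ξ : V) :
    Summable fun j : ℕ => φ ((2 : ℝ) ^ (-(j : ℤ)) • ξ) := by
  have hscale : Tendsto (fun j : ℕ => (2 : ℝ) ^ (-(j : ℤ)) • ξ) atTop (𝓝 0) := by
    simpa [dyadic] using tendsto_inv_dyadic.smul_const ξ
  refine summable_of_hasFiniteSupport ?_
  rw [HasFiniteSupport, Function.support, ← Filter.eventually_cofinite, Nat.cofinite_eq_atTop]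
  exact hscale.eventually h.eventually_shell_eq_zero

theorem low_zero (h : IsDyadicPartition χ φ) : χ 0 = 1 := by
  simpa [h.eventually_shell_eq_zero.self_of_nhds] using h.add_tsum_eq_one 0

theorem shell_eq_low_sub (h : IsDyadicPartition χ φ) (ξ : V) :
    φ ξ = χ ((2 : ℝ)⁻¹ • ξ) - χ ξ := by
  have hξ := h.add_tsum_eq_one ξ
  have hhalf := h.add_tsum_eq_one ((2 : ℝ)⁻¹ • ξ)
  have hshift (j : ℕ) : (2 : ℝ) ^ (-(j : ℤ)) • (2 : ℝ)⁻¹ • ξ =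
      (2 : ℝ) ^ (-((j + 1 : ℕ) : ℤ)) • ξ := by
    rw [smul_smul, ← zpow_sub_one₀ two_ne_zero]
    congr 2
    push_cast
    ring
  simp only [hshift] at hhalf
  rw [(h.summable ξ).tsum_eq_zero_add, Nat.cast_zero, neg_zero, zpow_zero, one_smul] at hξ
  linarith

/-- The low-frequency cutoff `χ` of a dyadic partition, as a Schwartz symbol. -/
noncomputable def symbol (h : IsDyadicPartition χ φ) : 𝓢(V, ℂ) :=
  (h.hasCompactSupport_low.comp_left Complex.ofReal_zero).toSchwartzMap
    (Complex.ofRealCLM.contDiff.comp h.contDiff_low)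

theorem symbol_apply (h : IsDyadicPartition χ φ) (ξ : V) : h.symbol ξ = χ ξ := rfl

theorem symbol_zero (h : IsDyadicPartition χ φ) : h.symbol 0 = 1 := by
  rw [symbol_apply, h.low_zero, Complex.ofReal_one]

theorem hasCompactSupport_symbol (h : IsDyadicPartition χ φ) : HasCompactSupport h.symbol :=
  h.hasCompactSupport_low.comp_left Complex.ofReal_zero

theorem shell_symbol_apply (h : IsDyadicPartition χ φ) (ξ : V) : shell h.symbol ξ = φ ξ := by
  rw [shell_apply, symbol_apply, symbol_apply, h.shell_eq_low_sub ξ, Complex.ofReal_sub]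

end IsDyadicPartition

end DyadicPartition

section NormBounds

theorem eLpNorm_top_le_ofReal_iff {X E : Type*} [TopologicalSpace X] [MeasurableSpace X]
    [NormedAddCommGroup E] {μ : Measure X} [μ.IsOpenPosMeasure] (f : X →ᵇ E) {M : ℝ}
    (hM : 0 ≤ M) : eLpNorm f ⊤ μ ≤ ENNReal.ofReal M ↔ ‖f‖ ≤ M := by
  rw [eLpNorm_exponent_top, BoundedContinuousFunction.norm_le hM]
  constructor
  · intro h x
    have hae : ∀ᵐ x ∂μ, ‖f x‖ ≤ M := by
      filter_upwards [ae_le_eLpNormEssSup (f := f) (μ := μ)] with x hx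
      rw [← ENNReal.ofReal_le_ofReal_iff hM, ofReal_norm]
      exact hx.trans h
    have hclosed : IsClosed {x | ‖f x‖ ≤ M} := isClosed_le f.continuous.norm continuous_const
    exact hclosed.closure_subset (Measure.dense_of_ae hae x)
  · exact fun h => eLpNormEssSup_le_of_ae_bound (.of_forall h)

theorem two_rpow_mul_le_ofReal_iff {t M : ℝ} {b : ℝ≥0∞} :
    (2 : ℝ≥0∞) ^ t * b ≤ ENNReal.ofReal M ↔ b ≤ ENNReal.ofReal (M * 2 ^ (-t)) := by
  have h : (2 : ℝ≥0∞) ^ t = ENNReal.ofReal (2 ^ t) := by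
    rw [← ENNReal.ofReal_rpow_of_pos two_pos, ENNReal.ofReal_ofNat]
  rw [Real.rpow_neg two_pos.le, ← div_eq_mul_inv, ENNReal.ofReal_div_of_pos (by positivity), h,
    mul_comm, ENNReal.le_div_iff_mul_le] <;> left
  · simpa using Real.rpow_pos_of_pos two_pos t
  · simp

theorem nnnorm_div_edist_rpow_le_ofReal_iff {X E : Type*} [MetricSpace X]
    [SeminormedAddCommGroup E] {x y : X} (hxy : x ≠ y) {s H : ℝ} (z : E) (hH : 0 ≤ H) :
    (‖z‖₊ : ℝ≥0∞) / edist x y ^ s ≤ ENNReal.ofReal H ↔ ‖z‖ ≤ H * dist x y ^ s := by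
  have hr : 0 < dist x y := dist_pos.2 hxy
  rw [edist_dist, ENNReal.ofReal_rpow_of_pos hr, ENNReal.div_le_iff
    (by simpa using Real.rpow_pos_of_pos hr s) (by simp), ← ENNReal.ofReal_mul hH,
    ← enorm_eq_nnnorm, ← ofReal_norm, ENNReal.ofReal_le_ofReal_iff (by positivity)]

theorem le_ofReal_mul_of_forall_le {a b : ℝ≥0∞} {C : ℝ} (hC : 0 < C)
    (h : ∀ M : ℝ, 0 ≤ M → b ≤ ENNReal.ofReal M → a ≤ ENNReal.ofReal (C * M)) :
    a ≤ ENNReal.ofReal C * b := by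
  rcases eq_or_ne b ⊤ with rfl | hb
  · simp [ENNReal.mul_top, hC]
  · rw [← ENNReal.ofReal_toReal hb, ← ENNReal.ofReal_mul hC.le]
    exact h _ ENNReal.toReal_nonneg (ENNReal.ofReal_toReal hb).ge

end NormBounds

section Blocks

variable {n : ℕ} {χ φ : EuclideanSpace ℝ (Fin n) → ℝ} {s : ℝ}
  {u : EuclideanSpace ℝ (Fin n) →ᵇ ℂ}

theorem lpBlock_neg_one (h : IsDyadicPartition χ φ) (u : EuclideanSpace ℝ (Fin n) →ᵇ ℂ) :
    lpBlock χ φ (-1) u = multiplier h.symbol u := by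
  rw [lpBlock, lpKernel, if_pos rfl, coe_multiplier, kernel, SchwartzMap.fourierInv_coe]
  rfl

theorem lpBlock_natCast (h : IsDyadicPartition χ φ) (u : EuclideanSpace ℝ (Fin n) →ᵇ ℂ) (j : ℕ) :
    lpBlock χ φ j u = multiplier (dilate (dyadic j) (shell h.symbol)) u := by
  have hsymbol : ⇑(dilate (dyadic j) (shell h.symbol)) =
      fun ξ => (φ ((2 : ℝ) ^ (-(j : ℤ)) • ξ) : ℂ) := by
    ext ξ
    simp [dilate_apply, h.shell_symbol_apply, Units.smul_def, coe_dyadic]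
  rw [lpBlock, lpKernel, if_neg (by omega), coe_multiplier, kernel, SchwartzMap.fourierInv_coe,
    hsymbol]
  rfl

/-- The Besov norm `sup_{j ≥ -1} 2^{js}‖Δⱼu‖_{L^∞}` of `B^s_{∞,∞}`, valued in `ℝ≥0∞`. -/
noncomputable def besovNorm (χ φ : EuclideanSpace ℝ (Fin n) → ℝ) (s : ℝ)
    (u : EuclideanSpace ℝ (Fin n) → ℂ) : ℝ≥0∞ :=
  ⨆ (j : ℤ) (_ : -1 ≤ j), (2 : ℝ≥0∞) ^ ((j : ℝ) * s) * eLpNorm (lpBlock χ φ j u) ⊤ volume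

theorem besovNorm_le_ofReal_iff (h : IsDyadicPartition χ φ) {M : ℝ} (hM : 0 ≤ M) :
    besovNorm χ φ s u ≤ ENNReal.ofReal M ↔ IsBesovBounded h.symbol s M u := by
  have hlow : eLpNorm (lpBlock χ φ (-1) u) ⊤ volume ≤
      ENNReal.ofReal (M * 2 ^ (-(((-1 : ℤ) : ℝ) * s))) ↔
      ‖multiplier h.symbol u‖ ≤ M * 2 ^ s := by
    rw [lpBlock_neg_one h, eLpNorm_top_le_ofReal_iff _ (by positivity)]
    simp
  have hshell (j : ℕ) : eLpNorm (lpBlock χ φ j u) ⊤ volume ≤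
      ENNReal.ofReal (M * 2 ^ (-(((j : ℤ) : ℝ) * s))) ↔
      ‖multiplier (dilate (dyadic j) (shell h.symbol)) u‖ ≤ M * (2 ^ (-s)) ^ j := by
    rw [lpBlock_natCast h, eLpNorm_top_le_ofReal_iff _ (by positivity), Int.cast_natCast,
      ← mul_neg, mul_comm (j : ℝ), Real.rpow_mul_natCast two_pos.le]
  simp only [besovNorm, iSup₂_le_iff, two_rpow_mul_le_ofReal_iff]
  refine ⟨fun hu => ⟨hlow.1 (hu _ le_rfl), fun j => (hshell j).1 (hu _ (by omega))⟩,
    fun hu j hj => ?_⟩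
  rcases hj.eq_or_lt with rfl | hj
  · exact hlow.2 hu.norm_low_le
  · lift j to ℕ using by omega
    exact (hshell j).2 (hu.norm_shell_le j)

theorem isHolderBounded_of_holderNorm_le {H : ℝ} (hH : 0 ≤ H)
    (hu : holderNorm s u ≤ ENNReal.ofReal H) : IsHolderBounded s H u := by
  refine ⟨(eLpNorm_top_le_ofReal_iff u hH).1 (le_self_add.trans hu), fun x y => ?_⟩
  rcases eq_or_ne x y with rfl | hxy
  · simpa using mul_nonneg hH (Real.rpow_nonneg le_rfl s)
  · rw [← dist_eq_norm x y, ← nnnorm_div_edist_rpow_le_ofReal_iff hxy _ hH]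
    have hsup : ⨆ (x) (y) (_ : x ≠ y), (‖u x - u y‖₊ : ℝ≥0∞) / edist x y ^ s ≤
        ENNReal.ofReal H := le_add_self.trans hu
    exact iSup₂_le_iff.1 (iSup_le_iff.1 hsup x) y hxy

theorem IsHolderBounded.holderNorm_le {H : ℝ} (hu : IsHolderBounded s H u) :
    holderNorm s u ≤ ENNReal.ofReal (2 * H) := by
  have hH : 0 ≤ H := (norm_nonneg u).trans hu.norm_le
  rw [two_mul, ENNReal.ofReal_add hH hH]
  refine add_le_add ((eLpNorm_top_le_ofReal_iff u hH).2 hu.norm_le)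
    (iSup_le fun x => iSup₂_le fun y hxy => ?_)
  rw [nnnorm_div_edist_rpow_le_ofReal_iff hxy _ hH, dist_eq_norm]
  exact hu.norm_sub_le x y

end Blocks

end LittlewoodPaley

open LittlewoodPaley
open scoped BoundedContinuousFunction

theorem stmt_4_general {n : ℕ} {χ φ : EuclideanSpace ℝ (Fin n) → ℝ} (h : IsDyadicPartition χ φ)
    {s : ℝ} (hs0 : 0 < s) (hs1 : s < 1) :
    ∃ C > (0 : ℝ), ∀ u : EuclideanSpace ℝ (Fin n) →ᵇ ℂ,
      besovNorm χ φ s u ≤ ENNReal.ofReal C * holderNorm s u ∧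
      holderNorm s u ≤ ENNReal.ofReal C * besovNorm χ φ s u := by
  obtain ⟨A, hA0, hA⟩ := exists_isBesovBounded_of_isHolderBounded (F := ℂ) h.symbol hs0.le
  obtain ⟨B, hB0, hB⟩ := exists_isHolderBounded_of_isBesovBounded (F := ℂ)
    h.hasCompactSupport_symbol h.symbol_zero hs0 hs1
  refine ⟨A + 2 * B + 1, by positivity, fun u =>
    ⟨le_ofReal_mul_of_forall_le (by positivity) fun H hH hu => ?_,
      le_ofReal_mul_of_forall_le (by positivity) fun M hM hu => ?_⟩⟩
  · have hbesov := hA u H (isHolderBounded_of_holderNorm_le hH hu)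
    refine ((besovNorm_le_ofReal_iff h (by positivity)).2 hbesov).trans ?_
    gcongr
    linarith
  · have hholder := hB u M ((besovNorm_le_ofReal_iff h hM).1 hu)
    refine hholder.holderNorm_le.trans ?_
    rw [← mul_assoc]
    gcongr
    linarith

/-- Littlewood–Paley characterization of Hölder spaces `C^s`, `0 < s < 1`: there is
`C = C_s > 0` so that for bounded continuous `u`, (i) `sup_{j≥−1} 2^{js}‖Δⱼu‖_∞ ≤ C|u|_{C^s}`
whenever `|u|_{C^s} < ∞`, and (ii) `|u|_{C^s} ≤ C·sup_{j≥−1} 2^{js}‖Δⱼu‖_∞` whenever the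
latter sup is finite. -/
theorem stmt_4 (n : ℕ) (hn : 1 ≤ n)
    (φ χ : EuclideanSpace ℝ (Fin n) → ℝ)
    (hφ_sm : ContDiff ℝ (⊤ : ℕ∞) φ) (hχ_sm : ContDiff ℝ (⊤ : ℕ∞) χ)
    (hφ_rad : ∃ h : ℝ → ℝ, ∀ ξ, φ ξ = h ‖ξ‖)
    (hχ_rad : ∃ h : ℝ → ℝ, ∀ ξ, χ ξ = h ‖ξ‖)
    (hφ_supp : Function.support φ ⊆ {ξ : EuclideanSpace ℝ (Fin n) | 1/2 ≤ ‖ξ‖ ∧ ‖ξ‖ ≤ 2})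
    (hχ_supp : Function.support χ ⊆ {ξ : EuclideanSpace ℝ (Fin n) | ‖ξ‖ ≤ 1})
    (h_sum : ∀ ξ, χ ξ + ∑' j : ℕ, φ ((2:ℝ) ^ (-(j:ℤ)) • ξ) = 1)
    (s : ℝ) (hs0 : 0 < s) (hs1 : s < 1) :
    ∃ C > (0:ℝ), ∀ u : EuclideanSpace ℝ (Fin n) → ℂ, Continuous u →
      (∃ B : ℝ, ∀ x, ‖u x‖ ≤ B) →
      ((holderNorm s u < ⊤ → ∀ j : ℤ, -1 ≤ j →
          (2:ℝ≥0∞) ^ ((j:ℝ) * s) * eLpNorm (lpBlock χ φ j u) ⊤ volume ≤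
            ENNReal.ofReal C * holderNorm s u) ∧
        ((⨆ (j : ℤ) (_ : -1 ≤ j),
            (2:ℝ≥0∞) ^ ((j:ℝ) * s) * eLpNorm (lpBlock χ φ j u) ⊤ volume) < ⊤ →
          holderNorm s u ≤ ENNReal.ofReal C *
            ⨆ (j : ℤ) (_ : -1 ≤ j),
              (2:ℝ≥0∞) ^ ((j:ℝ) * s) * eLpNorm (lpBlock χ φ j u) ⊤ volume)) := by
  have h : IsDyadicPartition χ φ := .of_support_subset hχ_sm one_half_pos hχ_supp
    (fun _ hξ => (hφ_supp hξ).1) h_sum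
  obtain ⟨C, hC, hCu⟩ := stmt_4_general h hs0 hs1
  refine ⟨C, hC, fun u hu ⟨B, hB⟩ => ?_⟩
  obtain ⟨hbesov, hholder⟩ := hCu (.ofNormedAddCommGroup u hu B hB)
  exact ⟨fun _ => iSup₂_le_iff.1 hbesov, fun _ => hholder⟩
end

section
/- Let μ ∈ (0,1], K > 0, l > 0. Let φ : ℝ² → ℝ be continuously differentiable with |∇φ(x)−∇φ(y)| ≤ K|x−y|^μ for all x,y. Let p ∈ ℝ² with φ(p) = 0 and |∇φ(p)| ≥ l. Set E = {x ∈ ℝ² : φ(x) > 0} and P = {y ∈ ℝ² : ∇φ(p)·(y−p) > 0}. Then there is a constant C depending only on μ such that for every ε > 0, the two-dimensional Lebesgue measure of (E Δ P) ∩ B(p,ε) is at most C·(K/l)·ε^{2+μ}, where E Δ P denotes the symmetric difference. -/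
open MeasureTheory

/-! On the symmetric difference, `φ` and its linearisation `L = ∇φ(p)·(· - p)` do not have the same
sign, so `|L| ≤ |φ - L|` there. By Taylor's formula the right-hand side is at most `K ε ^ (μ + 1)`
on `B(p, ε)`, so the set lies in a strip around the tangent hyperplane of half-width
`K ε ^ (μ + 1) / |∇φ(p)|`. The part of that strip inside `B(p, ε)` fits in a box, one of whose
sides is the width of the strip and all of whose other sides are `2 ε`. -/

open Module Metric Set

theorem norm_image_sub_sub_le_rpow_of_starConvex_of_holder {𝕜 E F : Type*} [RCLike 𝕜]
    [NormedAddCommGroup E] [NormedSpace 𝕜 E] [NormedSpace ℝ E] [NormedAddCommGroup F]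
    [NormedSpace 𝕜 F] {f : E → F} {f' : E → E →L[𝕜] F}
    {s : Set E} {p x : E} {K μ : ℝ} (hs : StarConvex ℝ p s) (hμ : 0 ≤ μ) (hK : 0 ≤ K)
    (hf : ∀ y ∈ s, HasFDerivWithinAt f (f' y) s y)
    (hholder : ∀ y ∈ s, ‖f' y - f' p‖ ≤ K * ‖y - p‖ ^ μ) (hx : x ∈ s) :
    ‖f x - f p - f' p (x - p)‖ ≤ K * ‖x - p‖ ^ (μ + 1) := by
  have hsub : segment ℝ p x ⊆ s := hs.segment_subset hx
  have hbound (y) (hy : y ∈ segment ℝ p x) : ‖f' y - f' p‖ ≤ K * ‖x - p‖ ^ μ := by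
    grw [hholder y (hsub hy), norm_sub_le_of_mem_segment hy]
  calc
    ‖f x - f p - f' p (x - p)‖ ≤ K * ‖x - p‖ ^ μ * ‖x - p‖ :=
      (convex_segment p x).norm_image_sub_le_of_norm_hasFDerivWithin_le'
        (fun y hy ↦ (hf y (hsub hy)).mono hsub) hbound
        (left_mem_segment ℝ p x) (right_mem_segment ℝ p x)
    _ = K * ‖x - p‖ ^ (μ + 1) := by
      rw [Real.rpow_add_one' (norm_nonneg _) (by positivity), mul_assoc]

theorem symmDiff_setOf_pos_subset_setOf_abs_le_abs_sub {α G : Type*} [AddCommGroup G]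
    [LinearOrder G] [IsOrderedAddMonoid G] (f g : α → G) :
    symmDiff {x | 0 < f x} {x | 0 < g x} ⊆ {x | |g x| ≤ |f x - g x|} := by
  rintro x (⟨hf, hg⟩ | ⟨hg, hf⟩) <;> simp only [mem_ofPred_eq, not_lt] at hf hg ⊢
  · rw [abs_of_nonpos hg, abs_of_nonneg (sub_nonneg.2 (hg.trans hf.le)), ← zero_sub]
    gcongr
  · rw [abs_of_pos hg, abs_sub_comm, abs_of_nonneg (sub_nonneg.2 (hf.trans hg.le))]
    exact (le_sub_self_iff _).2 hf

theorem symmDiff_superlevel_halfSpace_inter_ball_subset_strip {E : Type*} [NormedAddCommGroup E]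
    [NormedSpace ℝ E] {φ : E → ℝ} {K μ ε : ℝ} {p : E} (hμ : 0 ≤ μ) (hK : 0 ≤ K)
    (hφ : ∀ x ∈ ball p ε, DifferentiableAt ℝ φ x)
    (hholder : ∀ x ∈ ball p ε, ‖fderiv ℝ φ x - fderiv ℝ φ p‖ ≤ K * ‖x - p‖ ^ μ) (hp : φ p = 0) :
    symmDiff {x | 0 < φ x} {x | 0 < fderiv ℝ φ p (x - p)} ∩ ball p ε ⊆
      {x | |fderiv ℝ φ p (x - p)| ≤ K * ε ^ (μ + 1)} ∩ ball p ε := by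
  rintro x ⟨hsign, hball⟩
  refine ⟨?_, hball⟩
  calc
    |fderiv ℝ φ p (x - p)| ≤ |φ x - fderiv ℝ φ p (x - p)| :=
      symmDiff_setOf_pos_subset_setOf_abs_le_abs_sub _ _ hsign
    _ = ‖φ x - φ p - fderiv ℝ φ p (x - p)‖ := by rw [hp, sub_zero, Real.norm_eq_abs]
    _ ≤ K * ‖x - p‖ ^ (μ + 1) :=
      norm_image_sub_sub_le_rpow_of_starConvex_of_holder
        ((convex_ball p ε).starConvex (mem_ball_self (pos_of_mem_ball hball))) hμ hK
        (fun y hy ↦ (hφ y hy).hasFDerivAt.hasFDerivWithinAt) hholder hball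
    _ ≤ K * ε ^ (μ + 1) := by grw [(mem_ball_iff_norm.1 hball).le]

theorem exists_orthonormalBasis_apply_eq {𝕜 E ι : Type*} [RCLike 𝕜] [NormedAddCommGroup E]
    [InnerProductSpace 𝕜 E] [FiniteDimensional 𝕜 E] [Fintype ι]
    (hcard : finrank 𝕜 E = Fintype.card ι) (i : ι) {u : E} (hu : ‖u‖ = 1) :
    ∃ b : OrthonormalBasis ι 𝕜 E, b i = u := by
  have horth : Orthonormal 𝕜 (({i} : Set ι).domRestrict fun _ ↦ u) :=
    orthonormal_subsingleton_iff.2 fun _ ↦ hu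
  obtain ⟨b, hb⟩ := horth.exists_orthonormalBasis_extension_of_card_eq hcard
  exact ⟨b, hb i rfl⟩

section Strip

variable {E : Type*} [NormedAddCommGroup E] [InnerProductSpace ℝ E]
  [FiniteDimensional ℝ E] [MeasurableSpace E] [BorelSpace E]

theorem volume_setOf_forall_abs_inner_orthonormalBasis_le {ι : Type*} [Fintype ι]
    (b : OrthonormalBasis ι ℝ E) (p : E) (c : ι → ℝ) :
    volume {x | ∀ i, |inner ℝ (b i) (x - p)| ≤ c i} = ∏ i, ENNReal.ofReal (2 * c i) := by
  have hcoord : MeasurePreserving (fun x : E ↦ WithLp.ofLp (b.repr (x - p))) volume volume :=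
    (PiLp.volume_preserving_ofLp ι).comp
      (b.measurePreserving_repr.comp (measurePreserving_sub_right volume p))
  calc
    volume {x | ∀ i, |inner ℝ (b i) (x - p)| ≤ c i}
      = volume ((fun x : E ↦ WithLp.ofLp (b.repr (x - p))) ⁻¹' Icc (-c) c) := by
      congr 1
      ext x
      simp only [mem_ofPred_eq, mem_preimage, mem_Icc, Pi.le_def, Pi.neg_apply,
        b.repr_apply_apply, abs_le, forall_and]
    _ = volume (Icc (-c) c) := hcoord.measure_preimage measurableSet_Icc.nullMeasurableSet
    _ = ∏ i, ENNReal.ofReal (2 * c i) := by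
      simp only [Real.volume_Icc_pi, Pi.neg_apply, sub_neg_eq_add, two_mul]

theorem volume_setOf_abs_inner_le_inter_ball_le {u : E} (hu : ‖u‖ = 1) (p : E) (a r : ℝ) :
    volume ({x | |inner ℝ u (x - p)| ≤ a} ∩ ball p r) ≤
      ENNReal.ofReal (2 * a) * ENNReal.ofReal (2 * r) ^ (finrank ℝ E - 1) := by
  have : Nontrivial E := nontrivial_of_ne u 0 (norm_pos_iff.1 (hu ▸ one_pos))
  let i₀ : Fin (finrank ℝ E) := ⟨0, finrank_pos⟩
  obtain ⟨b, rfl⟩ := exists_orthonormalBasis_apply_eq (Fintype.card_fin _).symm i₀ hu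
  let c := Function.update (fun _ ↦ r) i₀ a
  have hc₀ : c i₀ = a := Function.update_self ..
  have hc (i) (hi : i ≠ i₀) : c i = r := Function.update_of_ne hi ..
  have hsub : {x | |inner ℝ (b i₀) (x - p)| ≤ a} ∩ ball p r ⊆
      {x | ∀ i, |inner ℝ (b i) (x - p)| ≤ c i} := by
    rintro x ⟨hstrip, hball⟩ i
    by_cases hi : i = i₀
    · rw [hi, hc₀]
      exact hstrip
    · calc
        |inner ℝ (b i) (x - p)| ≤ ‖b i‖ * ‖x - p‖ := abs_real_inner_le_norm _ _
        _ = dist x p := by rw [b.norm_eq_one, one_mul, dist_eq_norm]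
        _ ≤ r := (mem_ball.1 hball).le
        _ = c i := (hc i hi).symm
  calc
    _ ≤ volume {x | ∀ i, |inner ℝ (b i) (x - p)| ≤ c i} := measure_mono hsub
    _ = ∏ i, ENNReal.ofReal (2 * c i) := volume_setOf_forall_abs_inner_orthonormalBasis_le b p c
    _ = _ := by
      rw [← Finset.mul_prod_erase _ _ (Finset.mem_univ i₀), hc₀, Finset.prod_eq_pow_card
        fun i hi ↦ by rw [hc i (Finset.ne_of_mem_erase hi)],
        Finset.card_erase_of_mem (Finset.mem_univ i₀), Finset.card_fin]

theorem volume_setOf_abs_apply_le_inter_ball_le {L : StrongDual ℝ E} (hL : L ≠ 0) (p : E)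
    (a r : ℝ) :
    volume ({x | |L (x - p)| ≤ a} ∩ ball p r) ≤
      ENNReal.ofReal (2 * (a / ‖L‖)) * ENNReal.ofReal (2 * r) ^ (finrank ℝ E - 1) := by
  have hL_pos : 0 < ‖L‖ := norm_pos_iff.2 hL
  let u : E := ‖L‖⁻¹ • (InnerProductSpace.toDual ℝ E).symm L
  have hu : ‖u‖ = 1 := by
    rw [norm_smul, norm_inv, norm_norm, LinearIsometryEquiv.norm_map, inv_mul_cancel₀ hL_pos.ne']
  have hstrip : {x | |L (x - p)| ≤ a} = {x | |inner ℝ u (x - p)| ≤ a / ‖L‖} := by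
    ext x
    rw [mem_ofPred_eq, mem_ofPred_eq, real_inner_smul_left, InnerProductSpace.toDual_symm_apply,
      abs_mul, abs_inv, abs_norm, inv_mul_eq_div, div_le_div_iff_of_pos_right hL_pos]
  rw [hstrip]
  exact volume_setOf_abs_inner_le_inter_ball_le hu p _ r

theorem stmt_18_general {φ : E → ℝ} {K l μ ε : ℝ} {p : E} (hμ : 0 ≤ μ) (hK : 0 ≤ K) (hl : 0 < l)
    (hε : 0 < ε) (hφ : ∀ x ∈ ball p ε, DifferentiableAt ℝ φ x)
    (hholder : ∀ x ∈ ball p ε, ‖fderiv ℝ φ x - fderiv ℝ φ p‖ ≤ K * ‖x - p‖ ^ μ)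
    (hp : φ p = 0) (hlp : l ≤ ‖fderiv ℝ φ p‖) :
    volume (symmDiff {x | 0 < φ x} {x | 0 < fderiv ℝ φ p (x - p)} ∩ ball p ε) ≤
      ENNReal.ofReal (2 ^ finrank ℝ E * (K / l) * ε ^ (finrank ℝ E + μ)) := by
  have hL : fderiv ℝ φ p ≠ 0 := norm_pos_iff.1 (hl.trans_le hlp)
  have : Nontrivial E := by
    obtain ⟨v, hv⟩ := DFunLike.ne_iff.1 hL
    exact nontrivial_of_ne v 0 fun h ↦ hv (by rw [h, map_zero, map_zero])
  obtain ⟨m, hm⟩ := Nat.exists_eq_add_one.2 (finrank_pos (R := ℝ) (M := E))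
  calc
    _ ≤ volume ({x | |fderiv ℝ φ p (x - p)| ≤ K * ε ^ (μ + 1)} ∩ ball p ε) :=
      measure_mono (symmDiff_superlevel_halfSpace_inter_ball_subset_strip hμ hK hφ hholder hp)
    _ ≤ ENNReal.ofReal (2 * (K * ε ^ (μ + 1) / ‖fderiv ℝ φ p‖)) *
          ENNReal.ofReal (2 * ε) ^ (finrank ℝ E - 1) :=
      volume_setOf_abs_apply_le_inter_ball_le hL p _ ε
    _ ≤ ENNReal.ofReal (2 * (K * ε ^ (μ + 1) / l)) *
          ENNReal.ofReal (2 * ε) ^ (finrank ℝ E - 1) := by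
      gcongr
    _ = ENNReal.ofReal (2 ^ finrank ℝ E * (K / l) * ε ^ (finrank ℝ E + μ)) := by
      rw [← ENNReal.ofReal_pow (by positivity), ← ENNReal.ofReal_mul (by positivity), hm]
      congr 1
      rw [Nat.add_sub_cancel, Nat.cast_add_one, add_assoc, add_comm 1 μ,
        Real.rpow_add hε m, Real.rpow_natCast]
      ring

end Strip

/-- Measure of the symmetric difference between the superlevel set `E = {φ > 0}` of a
`C^{1,μ}` function and the half-plane `P` determined by the tangent line at a boundary point
`p`: `|E ∆ P ∩ B(p,ε)| ≤ C(μ)·(K/l)·ε^{2+μ}`. -/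
theorem stmt_18 (μ : ℝ) (hμ : μ ∈ Set.Ioc (0:ℝ) 1) :
    ∃ C > (0:ℝ), ∀ K l : ℝ, 0 < K → 0 < l →
      ∀ φ : EuclideanSpace ℝ (Fin 2) → ℝ, ContDiff ℝ 1 φ →
      (∀ x y : EuclideanSpace ℝ (Fin 2), ‖fderiv ℝ φ x - fderiv ℝ φ y‖ ≤ K * ‖x - y‖ ^ μ) →
      ∀ p : EuclideanSpace ℝ (Fin 2), φ p = 0 → l ≤ ‖fderiv ℝ φ p‖ →
      ∀ ε : ℝ, 0 < ε →
        volume (symmDiff {x : EuclideanSpace ℝ (Fin 2) | 0 < φ x}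
            {y : EuclideanSpace ℝ (Fin 2) | 0 < fderiv ℝ φ p (y - p)} ∩ Metric.ball p ε) ≤
          ENNReal.ofReal (C * (K / l) * ε ^ (2 + μ)) := by
  refine ⟨2 ^ 2, by norm_num, fun K l hK hl φ hφ hholder p hp hlp ε hε ↦ ?_⟩
  simpa using stmt_18_general hμ.1.le hK.le hl hε
    (fun x _ ↦ hφ.differentiable one_ne_zero x) (fun x _ ↦ hholder x p) hp hlp
end

section
/- Let μ ∈ (0,1], and let φ : ℝ² → ℝ be continuously differentiable with Hölder seminorm |∇φ|_μ := sup_{x≠y}|∇φ(x)−∇φ(y)|/|x−y|^μ finite and positive. Suppose E = {x ∈ ℝ² : φ(x) > 0} is nonempty and bounded, and |∇φ|_inf := inf_{x∈∂E}|∇φ(x)| > 0. Set δ = (|∇φ|_inf/|∇φ|_μ)^{1/μ}. Let x₀ ∈ E with d(x₀) := dist(x₀, ∂E) < δ, let x̃ ∈ ∂E be a point with |x₀−x̃| = d(x₀), and for ρ ≥ d(x₀) define S_ρ(x₀) = {z : |z|=1, x₀+ρz ∈ E}, Σ(x₀) = {z : |z|=1, ∇φ(x̃)·z ≥ 0}, and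 R_ρ(x₀) = S_ρ(x₀) Δ Σ(x₀) (symmetric difference). Then the one-dimensional Hausdorff measure of R_ρ(x₀) satisfies H¹(R_ρ(x₀)) ≤ 2π·((1+2^μ)·d(x₀)/ρ + 2^μ·(ρ/δ)^μ). -/
open MeasureTheory
open scoped ENNReal

/-!
Let `d = |x₀ - x̃|`. If a direction `z` is counted in exactly one of `S_ρ(x₀)` and `Σ(x₀)`, then
`φ(x₀ + ρz)` and `∇φ(x̃)·z` have opposite signs, so `ρ|∇φ(x̃)·z|` is at most the error made when
`φ(x₀ + ρz)` is replaced by `ρ ∇φ(x̃)·z`. The first-order Taylor estimate at `x̃` bounds that error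
by `|∇φ(x̃)| d + K (ρ + d)^{1+μ}`, where `K (ρ + d)^μ ≤ |∇φ(x̃)| (2ρ/δ)^μ` by the choice of
`δ`. Hence `R_ρ(x₀)` is contained in a strip of unit vectors whose component along `∇φ(x̃)` is
small. In polar coordinates the strip of half-width `A` consists of two arcs of total length
`4 arcsin A ≤ 2πA`.
-/

open Module Set

section Circle

lemma arcsin_le_pi_div_two_mul {x : ℝ} (hx : 0 ≤ x) : Real.arcsin x ≤ Real.pi / 2 * x := by
  rcases le_total x 1 with hx1 | hx1
  · have hjordan := Real.mul_le_sin (Real.arcsin_nonneg.2 hx) (Real.arcsin_le_pi_div_two x)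
    rw [Real.sin_arcsin (by linarith) hx1] at hjordan
    calc Real.arcsin x = Real.pi / 2 * (2 / Real.pi * Real.arcsin x) := by field_simp
      _ ≤ Real.pi / 2 * x := by gcongr
  · exact (Real.arcsin_le_pi_div_two x).trans (le_mul_of_one_le_right (by positivity) hx1)

lemma abs_arg_eq_arccos_re {z : ℂ} (hz : ‖z‖ = 1) : |z.arg| = Real.arccos z.re := by
  have hz0 : z ≠ 0 := norm_ne_zero_iff.1 (by simp [hz])
  rw [← Complex.angle_one_left hz0, InnerProductGeometry.angle]
  simp [Complex.inner, hz]

lemma unitCircle_inter_abs_re_le_subset (A : ℝ) :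
    {z : ℂ | ‖z‖ = 1 ∧ |z.re| ≤ A} ⊆
      circleMap 0 1 '' (Icc (Real.arccos A) (Real.pi - Real.arccos A) ∪
        Icc (-(Real.pi - Real.arccos A)) (-Real.arccos A)) := by
  rintro z ⟨hz, hre⟩
  have hlower : Real.arccos A ≤ |z.arg| := by
    rw [abs_arg_eq_arccos_re hz]
    exact Real.antitone_arccos (abs_le.1 hre).2
  have hupper : |z.arg| ≤ Real.pi - Real.arccos A := by
    rw [abs_arg_eq_arccos_re hz, ← Real.arccos_neg]
    exact Real.antitone_arccos (abs_le.1 hre).1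
  refine ⟨z.arg, ?_, by simpa [circleMap, hz] using Complex.norm_mul_exp_arg_mul_I z⟩
  rcases abs_cases z.arg with ⟨habs, -⟩ | ⟨habs, -⟩ <;> rw [habs] at hlower hupper
  · exact Or.inl ⟨hlower, hupper⟩
  · exact Or.inr ⟨neg_le.1 hupper, le_neg.1 hlower⟩

lemma hausdorffMeasure_image_circleMap_le (c : ℂ) (s : Set ℝ) :
    μH[1] (circleMap c 1 '' s) ≤ volume s := by
  simpa [hausdorffMeasure_real] using
    (lipschitzWith_circleMap c 1).hausdorffMeasure_image_le zero_le_one s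

lemma hausdorffMeasure_unitCircle_inter_abs_re_le {A : ℝ} (hA : 0 ≤ A) :
    μH[1] {z : ℂ | ‖z‖ = 1 ∧ |z.re| ≤ A} ≤ ENNReal.ofReal (2 * Real.pi * A) := by
  have harcsin : 0 ≤ Real.arcsin A := Real.arcsin_nonneg.2 hA
  have harccos : Real.arccos A = Real.pi / 2 - Real.arcsin A := rfl
  calc μH[1] {z : ℂ | ‖z‖ = 1 ∧ |z.re| ≤ A}
      ≤ volume (Icc (Real.arccos A) (Real.pi - Real.arccos A) ∪
          Icc (-(Real.pi - Real.arccos A)) (-Real.arccos A)) :=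
        (measure_mono (unitCircle_inter_abs_re_le_subset A)).trans
          (hausdorffMeasure_image_circleMap_le 0 _)
    _ ≤ volume (Icc (Real.arccos A) (Real.pi - Real.arccos A)) +
          volume (Icc (-(Real.pi - Real.arccos A)) (-Real.arccos A)) := measure_union_le _ _
    _ = ENNReal.ofReal (4 * Real.arcsin A) := by
        rw [Real.volume_Icc, Real.volume_Icc, ← ENNReal.ofReal_add (by linarith) (by linarith),
          harccos]
        ring_nf
    _ ≤ ENNReal.ofReal (2 * Real.pi * A) := by
        refine ENNReal.ofReal_le_ofReal ?_
        linarith [arcsin_le_pi_div_two_mul hA]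

end Circle

section EuclideanPlane

variable {F : Type*} [NormedAddCommGroup F] [InnerProductSpace ℝ F]

lemma exists_linearIsometry_complex_re_eq_inner (hF : finrank ℝ F = 2) {u : F} (hu : ‖u‖ = 1) :
    ∃ e : F →ₗᵢ[ℝ] ℂ, ∀ z, (e z).re = inner ℝ u z := by
  have : Fact (finrank ℝ F = 2) := ⟨hF⟩
  have : FiniteDimensional ℝ F := .of_fact_finrank_eq_two
  let o : Orientation ℝ F (Fin 2) :=
    ((stdOrthonormalBasis ℝ F).reindex (finCongr hF)).toBasis.orientation
  exact ⟨⟨o.kahler u, fun z => by rw [o.norm_kahler, hu, one_mul]⟩,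
    fun z => by simp [o.kahler_apply_apply]⟩

lemma exists_linearIsometry_complex_norm_mul_re_eq (hF : finrank ℝ F = 2)
    {L : StrongDual ℝ F} (hL : L ≠ 0) :
    ∃ e : F →ₗᵢ[ℝ] ℂ, ∀ z, ‖L‖ * (e z).re = L z := by
  have : FiniteDimensional ℝ F := .of_finrank_pos (by omega)
  have hnorm : ‖L‖ ≠ 0 := norm_ne_zero_iff.2 hL
  obtain ⟨e, he⟩ := exists_linearIsometry_complex_re_eq_inner hF
    (u := ‖L‖⁻¹ • (InnerProductSpace.toDual ℝ F).symm L) (by simp [norm_smul, hnorm])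
  refine ⟨e, fun z => ?_⟩
  rw [he, real_inner_smul_left, InnerProductSpace.toDual_symm_apply, mul_inv_cancel_left₀ hnorm]

lemma hausdorffMeasure_unitSphere_inter_abs_apply_le [MeasurableSpace F] [BorelSpace F]
    (hF : finrank ℝ F = 2) {L : StrongDual ℝ F} (hL : L ≠ 0) {A : ℝ} (hA : 0 ≤ A) :
    μH[1] {z : F | ‖z‖ = 1 ∧ |L z| ≤ ‖L‖ * A} ≤ ENNReal.ofReal (2 * Real.pi * A) := by
  obtain ⟨e, he⟩ := exists_linearIsometry_complex_norm_mul_re_eq hF hL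
  rw [← e.isometry.hausdorffMeasure_image (Or.inl zero_le_one)]
  refine (measure_mono ?_).trans (hausdorffMeasure_unitCircle_inter_abs_re_le hA)
  rintro _ ⟨z, ⟨hz, hLz⟩, rfl⟩
  rw [← he, abs_mul, abs_norm] at hLz
  exact ⟨by rw [e.norm_map, hz], le_of_mul_le_mul_left hLz (norm_pos_iff.2 hL)⟩

end EuclideanPlane

section Taylor

variable {F G : Type*} [NormedAddCommGroup F] [NormedSpace ℝ F]
  [NormedAddCommGroup G] [NormedSpace ℝ G]

lemma norm_sub_sub_fderiv_le_of_norm_fderiv_sub_le_rpow {f : F → G} (hf : Differentiable ℝ f)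
    {K μ : ℝ} (hK : 0 ≤ K) (hμ : 0 ≤ μ) {x : F}
    (hHolder : ∀ w, ‖fderiv ℝ f w - fderiv ℝ f x‖ ≤ K * ‖w - x‖ ^ μ) (y : F) :
    ‖f y - f x - fderiv ℝ f x (y - x)‖ ≤ K * ‖y - x‖ ^ μ * ‖y - x‖ := by
  refine (convex_closedBall x ‖y - x‖).norm_image_sub_le_of_norm_fderiv_le' (𝕜 := ℝ)
    (fun w _ => hf w) (fun w hw => (hHolder w).trans ?_)
    (Metric.mem_closedBall_self (norm_nonneg _)) (mem_closedBall_iff_norm.2 le_rfl)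
  have := mem_closedBall_iff_norm.1 hw
  gcongr

end Taylor

section Directions

lemma abs_le_abs_sub_of_mul_nonpos {a b : ℝ} (hab : a * b ≤ 0) : |b| ≤ |a - b| :=
  sq_le_sq.1 (by nlinarith [sq_nonneg a])

variable {F : Type*} [NormedAddCommGroup F] [NormedSpace ℝ F]

/-- The set `S_ρ(x₀)` of unit directions in which the point at distance `ρ` from `x₀` lies
in `E`. -/
def landingDirections (E : Set F) (x₀ : F) (ρ : ℝ) : Set F := {z | ‖z‖ = 1 ∧ x₀ + ρ • z ∈ E}

/-- The closed half of the unit sphere on which `L` is nonnegative. For `L = ∇φ(x̃)` it is the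
half-circle `Σ(x₀)`. -/
def halfSphere (L : StrongDual ℝ F) : Set F := {z | ‖z‖ = 1 ∧ 0 ≤ L z}

variable {φ : F → ℝ} {x₀ xt z : F} {L : StrongDual ℝ F} {K μ δ ρ : ℝ}

lemma norm_eq_one_of_mem_symmDiff_halfSphere {E : Set F}
    (hz : z ∈ symmDiff (landingDirections E x₀ ρ) (halfSphere L)) : ‖z‖ = 1 :=
  hz.elim (fun h => h.1.1) fun h => h.1.1

lemma mul_apply_nonpos_of_mem_symmDiff_halfSphere
    (hz : z ∈ symmDiff (landingDirections {x | 0 < φ x} x₀ ρ) (halfSphere L)) :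
    φ (x₀ + ρ • z) * L z ≤ 0 := by
  rcases hz with ⟨⟨hz1, hφz⟩, hLz⟩ | ⟨⟨hz1, hLz⟩, hφz⟩
  · exact mul_nonpos_of_nonneg_of_nonpos (le_of_lt hφz) (not_le.1 fun h => hLz ⟨hz1, h⟩).le
  · exact mul_nonpos_of_nonpos_of_nonneg (not_lt.1 fun h => hφz ⟨hz1, h⟩) hLz

lemma abs_sub_mul_fderiv_apply_le (hφ : Differentiable ℝ φ) (hK : 0 ≤ K) (hμ : 0 ≤ μ)
    (hHolder : ∀ x, ‖fderiv ℝ φ x - fderiv ℝ φ xt‖ ≤ K * ‖x - xt‖ ^ μ) (hφxt : φ xt = 0)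
    (hρ : 0 ≤ ρ) (hz : ‖z‖ = 1) :
    |φ (x₀ + ρ • z) - ρ * fderiv ℝ φ xt z| ≤
      K * (ρ + dist x₀ xt) ^ μ * (ρ + dist x₀ xt) + ‖fderiv ℝ φ xt‖ * dist x₀ xt := by
  have hsplit : x₀ + ρ • z - xt = ρ • z + (x₀ - xt) := by abel
  have hdist : ‖x₀ + ρ • z - xt‖ ≤ ρ + dist x₀ xt := by
    rw [hsplit, dist_eq_norm]
    refine (norm_add_le _ _).trans_eq ?_
    rw [norm_smul, hz, mul_one, Real.norm_of_nonneg hρ]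
  have htaylor : |φ (x₀ + ρ • z) - fderiv ℝ φ xt (x₀ + ρ • z - xt)| ≤
      K * ‖x₀ + ρ • z - xt‖ ^ μ * ‖x₀ + ρ • z - xt‖ := by
    simpa only [hφxt, sub_zero, Real.norm_eq_abs] using
      norm_sub_sub_fderiv_le_of_norm_fderiv_sub_le_rpow hφ hK hμ hHolder (x₀ + ρ • z)
  have hlinear : fderiv ℝ φ xt (x₀ + ρ • z - xt) =
      ρ * fderiv ℝ φ xt z + fderiv ℝ φ xt (x₀ - xt) := by
    rw [hsplit, map_add, map_smul, smul_eq_mul]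
  calc |φ (x₀ + ρ • z) - ρ * fderiv ℝ φ xt z|
      = |(φ (x₀ + ρ • z) - fderiv ℝ φ xt (x₀ + ρ • z - xt)) + fderiv ℝ φ xt (x₀ - xt)| := by
        rw [hlinear]; ring_nf
    _ ≤ |φ (x₀ + ρ • z) - fderiv ℝ φ xt (x₀ + ρ • z - xt)| + |fderiv ℝ φ xt (x₀ - xt)| :=
        abs_add_le _ _
    _ ≤ K * ‖x₀ + ρ • z - xt‖ ^ μ * ‖x₀ + ρ • z - xt‖ + ‖fderiv ℝ φ xt‖ * dist x₀ xt := by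
        rw [dist_eq_norm]
        exact add_le_add htaylor ((fderiv ℝ φ xt).le_opNorm _)
    _ ≤ K * (ρ + dist x₀ xt) ^ μ * (ρ + dist x₀ xt) + ‖fderiv ℝ φ xt‖ * dist x₀ xt := by
        gcongr

lemma mul_add_rpow_le_of_mul_rpow_le {N d : ℝ} (hK : 0 ≤ K) (hμ : 0 ≤ μ) (hδ : 0 < δ)
    (hN : K * δ ^ μ ≤ N) (hd : 0 ≤ d) (hdρ : d ≤ ρ) :
    K * (ρ + d) ^ μ ≤ N * (2 ^ μ * (ρ / δ) ^ μ) := by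
  have hρ : 0 ≤ ρ := hd.trans hdρ
  calc K * (ρ + d) ^ μ ≤ K * (2 * (ρ / δ) * δ) ^ μ := by
        gcongr
        rw [mul_assoc, div_mul_cancel₀ _ hδ.ne']
        linarith
    _ = K * δ ^ μ * (2 ^ μ * (ρ / δ) ^ μ) := by
        rw [Real.mul_rpow (by positivity) hδ.le, Real.mul_rpow zero_le_two (by positivity)]
        ring
    _ ≤ N * (2 ^ μ * (ρ / δ) ^ μ) := by gcongr

-- For `1 ≤ q` the bound `t ≤ N` suffices; for `q < 1` the cross term `c q d` is absorbed by `c d`.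
lemma le_mul_of_le_of_mul_le {t N c q d : ℝ} (hN : 0 ≤ N) (hc : 1 ≤ c) (hd : 0 ≤ d) (hρ : 0 < ρ)
    (htN : t ≤ N) (ht : ρ * t ≤ N * (c * q) * (ρ + d) + N * d) :
    t ≤ N * ((1 + c) * d / ρ + c * q) := by
  rcases le_total 1 q with hq1 | hq1
  · refine htN.trans (le_mul_of_one_le_right hN ?_)
    have hdρ : 0 ≤ (1 + c) * d / ρ := by positivity
    linarith [one_le_mul_of_one_le_of_one_le hc hq1]
  · refine le_of_mul_le_mul_left ?_ hρ
    have hcross : c * q * d ≤ c * d := by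
      gcongr
      exact mul_le_of_le_one_right (by positivity) hq1
    calc ρ * t ≤ N * (c * q * ρ + c * q * d + d) := ht.trans_eq (by ring)
      _ ≤ N * (c * q * ρ + c * d + d) := by gcongr
      _ = ρ * (N * ((1 + c) * d / ρ + c * q)) := by field_simp; ring

lemma abs_fderiv_apply_le_of_mem_symmDiff_halfSphere (hφ : Differentiable ℝ φ)
    (hK : 0 ≤ K) (hμ : 0 ≤ μ)
    (hHolder : ∀ x, ‖fderiv ℝ φ x - fderiv ℝ φ xt‖ ≤ K * ‖x - xt‖ ^ μ) (hφxt : φ xt = 0)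
    (hδ : 0 < δ) (hKδ : K * δ ^ μ ≤ ‖fderiv ℝ φ xt‖) (hρ : 0 < ρ) (hdρ : dist x₀ xt ≤ ρ)
    (hz : z ∈ symmDiff (landingDirections {x | 0 < φ x} x₀ ρ) (halfSphere (fderiv ℝ φ xt))) :
    |fderiv ℝ φ xt z| ≤
      ‖fderiv ℝ φ xt‖ * ((1 + 2 ^ μ) * dist x₀ xt / ρ + 2 ^ μ * (ρ / δ) ^ μ) := by
  have hz1 : ‖z‖ = 1 := norm_eq_one_of_mem_symmDiff_halfSphere hz
  have hsign : φ (x₀ + ρ • z) * (ρ * fderiv ℝ φ xt z) ≤ 0 := by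
    rw [mul_left_comm]
    exact mul_nonpos_of_nonneg_of_nonpos hρ.le (mul_apply_nonpos_of_mem_symmDiff_halfSphere hz)
  refine le_mul_of_le_of_mul_le (norm_nonneg _) (Real.one_le_rpow one_le_two hμ)
    dist_nonneg hρ ((fderiv ℝ φ xt).unit_le_opNorm z hz1.le) ?_
  calc ρ * |fderiv ℝ φ xt z| = |ρ * fderiv ℝ φ xt z| := by rw [abs_mul, abs_of_pos hρ]
    _ ≤ |φ (x₀ + ρ • z) - ρ * fderiv ℝ φ xt z| := abs_le_abs_sub_of_mul_nonpos hsign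
    _ ≤ K * (ρ + dist x₀ xt) ^ μ * (ρ + dist x₀ xt) + ‖fderiv ℝ φ xt‖ * dist x₀ xt :=
        abs_sub_mul_fderiv_apply_le hφ hK hμ hHolder hφxt hρ.le hz1
    _ ≤ ‖fderiv ℝ φ xt‖ * (2 ^ μ * (ρ / δ) ^ μ) * (ρ + dist x₀ xt) +
          ‖fderiv ℝ φ xt‖ * dist x₀ xt := by
        gcongr ?_ * _ + _
        exact mul_add_rpow_le_of_mul_rpow_le hK hμ hδ hKδ dist_nonneg hdρ

end Directions

theorem stmt_19_general {F : Type*} [NormedAddCommGroup F] [InnerProductSpace ℝ F]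
    [MeasurableSpace F] [BorelSpace F] (hF : finrank ℝ F = 2) {φ : F → ℝ}
    (hφ : Differentiable ℝ φ) {K μ δ ρ : ℝ} (hK : 0 < K) (hμ : 0 ≤ μ) {x₀ xt : F}
    (hHolder : ∀ x, ‖fderiv ℝ φ x - fderiv ℝ φ xt‖ ≤ K * ‖x - xt‖ ^ μ) (hφxt : φ xt = 0)
    (hδ : 0 < δ) (hKδ : K * δ ^ μ ≤ ‖fderiv ℝ φ xt‖) (hρ : 0 < ρ) (hdρ : dist x₀ xt ≤ ρ) :
    μH[1] (symmDiff (landingDirections {x | 0 < φ x} x₀ ρ) (halfSphere (fderiv ℝ φ xt))) ≤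
      ENNReal.ofReal
        (2 * Real.pi * ((1 + 2 ^ μ) * dist x₀ xt / ρ + 2 ^ μ * (ρ / δ) ^ μ)) := by
  have hgrad : fderiv ℝ φ xt ≠ 0 := norm_pos_iff.1 (hKδ.trans_lt' (by positivity))
  refine (measure_mono fun z hz => ?_).trans
    (hausdorffMeasure_unitSphere_inter_abs_apply_le hF hgrad (by positivity))
  exact ⟨norm_eq_one_of_mem_symmDiff_halfSphere hz,
    abs_fderiv_apply_le_of_mem_symmDiff_halfSphere hφ hK.le hμ hHolder hφxt hδ hKδ hρ hdρ hz⟩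

/-- The Bertozzi–Constantin geometric lemma: near the boundary of a `C^{1,μ}` patch
`E = {φ > 0}`, the set `S_ρ(x₀)` of unit directions landing in `E` at distance `ρ` differs
from the half-circle `Σ(x₀)` determined by `∇φ` at the nearest boundary point by a set of
arclength at most `2π((1+2^μ)d(x₀)/ρ + 2^μ(ρ/δ)^μ)`, where `δ = (|∇φ|_inf/|∇φ|_μ)^{1/μ}`. -/
theorem stmt_19 (μ : ℝ) (hμ : μ ∈ Set.Ioc (0:ℝ) 1)
    (φ : EuclideanSpace ℝ (Fin 2) → ℝ) (hφ : ContDiff ℝ 1 φ)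
    (K : ℝ) (hK : 0 < K)
    (hHolder : ∀ x y : EuclideanSpace ℝ (Fin 2),
      ‖fderiv ℝ φ x - fderiv ℝ φ y‖ ≤ K * ‖x - y‖ ^ μ)
    (E : Set (EuclideanSpace ℝ (Fin 2))) (hE : E = {x | 0 < φ x})
    (hE_ne : E.Nonempty) (hE_bdd : Bornology.IsBounded E)
    (l : ℝ) (hl : 0 < l)
    (hl_inf : ∀ x ∈ frontier E, l ≤ ‖fderiv ℝ φ x‖)
    (δ : ℝ) (hδ : δ = (l / K) ^ (1 / μ))
    (x₀ : EuclideanSpace ℝ (Fin 2)) (hx₀ : x₀ ∈ E)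
    (d : ℝ) (hd : d = Metric.infDist x₀ (frontier E)) (hdδ : d < δ)
    (xt : EuclideanSpace ℝ (Fin 2)) (hxt : xt ∈ frontier E) (hxtd : dist x₀ xt = d) :
    ∀ ρ : ℝ, d ≤ ρ →
      μH[1] (symmDiff {z : EuclideanSpace ℝ (Fin 2) | ‖z‖ = 1 ∧ x₀ + ρ • z ∈ E}
          {z : EuclideanSpace ℝ (Fin 2) | ‖z‖ = 1 ∧ 0 ≤ fderiv ℝ φ xt z}) ≤
        ENNReal.ofReal
          (2 * Real.pi * ((1 + 2 ^ μ) * d / ρ + 2 ^ μ * (ρ / δ) ^ μ)) := by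
  subst hE hδ hxtd
  intro ρ hdρ
  have hφxt : φ xt = 0 := (frontier_lt_subset_eq continuous_const hφ.continuous hxt).symm
  have hd_pos : 0 < dist x₀ xt := dist_pos.2 fun h => hx₀.ne' (h ▸ hφxt)
  have hKδ : K * ((l / K) ^ (1 / μ)) ^ μ = l := by
    rw [one_div, Real.rpow_inv_rpow (by positivity) hμ.1.ne', mul_div_cancel₀ l hK.ne']
  exact stmt_19_general finrank_euclideanSpace_fin (hφ.differentiable one_ne_zero) hK hμ.1.le
    (fun x => hHolder x xt) hφxt (by positivity) (hKδ.trans_le (hl_inf xt hxt))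
    (hd_pos.trans_le hdρ) hdρ
end
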